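/- arXiv:1710.03815 — 3 statements merged into one kernel-verified Lean document; each statement's English description precedes it below -/
import Mathlib

section
/- Let O₆ be the octahedral graph, i.e. the complete tripartite graph K_{2,2,2} on 6 vertices. Then for all sufficiently large n, ex({M(O₆)}, n) = 2^{n−1} + 4. -/
open scoped Classical

/-- `M` has an `N`-restriction: some injective linear image of `N` lies inside `M`. -/
def HasRestriction {α β : Type*} [AddCommMonoid α] [AddCommMonoid β]
    [Module (ZMod 2) α] [Module (ZMod 2) β] (N : Set α) (M : Set β) : Prop :=
  ∃ ψ : α →ₗ[ZMod 2] β, Function.Injective ψ ∧ ψ '' N ⊆ M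

/-- The set of distinct `N`-restrictions of `M` (as subsets of `M`). -/
def restrictionSet {α β : Type*} [AddCommMonoid α] [AddCommMonoid β]
    [Module (ZMod 2) α] [Module (ZMod 2) β] (N : Set α) (M : Set β) : Set (Set β) :=
  {S | S ⊆ M ∧ ∃ ψ : α →ₗ[ZMod 2] β, Function.Injective ψ ∧ S = ψ '' N}

/-- The Turán number for a single excluded matroid `N`. -/
noncomputable def exNum {α : Type*} [AddCommMonoid α] [Module (ZMod 2) α] (N : Set α) (n : ℕ) : ℕ :=
  sSup {m | ∃ M : Set (Fin n → ZMod 2), 0 ∉ M ∧ ¬ HasRestriction N M ∧ M.ncard = m}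

/-- The Turán number for a family of excluded matroids. -/
noncomputable def exNumFam (𝒩 : Set (Σ k : ℕ, Set (Fin k → ZMod 2))) (n : ℕ) : ℕ :=
  sSup {m | ∃ M : Set (Fin n → ZMod 2), 0 ∉ M ∧
    (∀ N ∈ 𝒩, ¬ HasRestriction N.2 M) ∧ M.ncard = m}

/-- The critical number of `M ⊆ 𝔽₂ⁿ`. -/
noncomputable def critNum {n : ℕ} (M : Set (Fin n → ZMod 2)) : ℕ :=
  sInf {c | ∃ φ : (Fin n → ZMod 2) →ₗ[ZMod 2] (Fin c → ZMod 2), ∀ x ∈ M, φ x ≠ 0}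

/-- The rank of `M`: dimension of its span. -/
noncomputable def rankM {n : ℕ} (M : Set (Fin n → ZMod 2)) : ℕ :=
  Module.finrank (ZMod 2) (Submodule.span (ZMod 2) M)

/-- `M` is a copy of `N^{n,t}`. -/
def IsCopyNnt {d : ℕ} (N : Set (Fin d → ZMod 2)) (n t : ℕ)
    (M : Set (Fin n → ZMod 2)) : Prop :=
  ∃ F : Submodule (ZMod 2) (Fin n → ZMod 2), Module.finrank (ZMod 2) F = n - t ∧
    ∃ θ : (Fin d → ZMod 2) →ₗ[ZMod 2] (Fin n → ZMod 2),
      Function.Injective θ ∧ (∀ x, θ x ∈ F) ∧ M = θ '' N ∪ {x | x ∉ F}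

/-- The decomposition family `𝒟(𝒩)`. -/
def decompFam (𝒩 : Set (Σ k : ℕ, Set (Fin k → ZMod 2))) (k : ℕ) :
    Set (Σ k : ℕ, Set (Fin k → ZMod 2)) :=
  {D | 0 ∉ D.2 ∧
    (∃ N ∈ 𝒩, ∃ M : Set (Fin N.1 → ZMod 2), IsCopyNnt D.2 N.1 k M ∧ HasRestriction N.2 M) ∧
    ∀ D' : Σ k : ℕ, Set (Fin k → ZMod 2), 0 ∉ D'.2 →
      (∃ N ∈ 𝒩, ∃ M : Set (Fin N.1 → ZMod 2), IsCopyNnt D'.2 N.1 k M ∧ HasRestriction N.2 M) →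
      HasRestriction D'.2 D.2 → HasRestriction D.2 D'.2}

/-- The cycle matroid of a simple graph. -/
def cycleMatroid {V : Type*} [DecidableEq V] (G : SimpleGraph V) : Set (V → ZMod 2) :=
  {x | ∃ u v, G.Adj u v ∧ x = Pi.single u 1 + Pi.single v 1}

/-- The octahedral graph `K_{2,2,2}`: vertices `0..5` paired as `{0,1},{2,3},{4,5}`,
two vertices adjacent iff they lie in different pairs. -/
def octahedron : SimpleGraph (Fin 6) :=
  SimpleGraph.fromRel (fun u v => (u : ℕ) / 2 ≠ (v : ℕ) / 2)


namespace Octa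

lemma z2 (a : ZMod 2) : a = 0 ∨ a = 1 := by revert a; decide

lemma add_self' {n : ℕ} (x : Fin n → ZMod 2) : x + x = 0 := by
  ext i; simp only [Pi.add_apply, Pi.zero_apply]; generalize x i = a; revert a; decide

lemma embed {n : ℕ} (M : Set (Fin n → ZMod 2)) (v : Fin 6 → (Fin n → ZMod 2))
    (hv : LinearIndependent (ZMod 2) v)
    (h : ∀ i j : Fin 6, (i : ℕ) / 2 < (j : ℕ) / 2 → v i + v j ∈ M) :
    HasRestriction (cycleMatroid octahedron) M := by
  refine ⟨Fintype.linearCombination (ZMod 2) v, ?_, ?_⟩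
  · exact hv.fintypeLinearCombination_injective
  · rintro _ ⟨x, ⟨i, j, hij, rfl⟩, rfl⟩
    simp only [octahedron, SimpleGraph.fromRel_adj] at hij
    rw [map_add]
    simp only [Fintype.linearCombination_apply_single, one_smul]
    rcases lt_or_gt_of_ne (show (i : ℕ) / 2 ≠ (j : ℕ) / 2 by omega) with h1 | h1
    · exact h i j h1
    · rw [add_comm]; exact h j i h1

noncomputable def chi {n : ℕ} (r x : Fin n → ZMod 2) : ℝ := if r ⬝ᵥ x = 0 then 1 else -1

lemma chi_symm {n : ℕ} (r x : Fin n → ZMod 2) : chi r x = chi x r := by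
  simp [chi, dotProduct_comm]

lemma chi_add {n : ℕ} (r x y : Fin n → ZMod 2) : chi r (x + y) = chi r x * chi r y := by
  simp only [chi, dotProduct_add]
  rcases z2 (r ⬝ᵥ x) with h | h <;> rcases z2 (r ⬝ᵥ y) with h' | h' <;> rw [h, h']
  · simp
  · simp
  · simp
  · have : (1 + 1 : ZMod 2) = 0 := by decide
    simp [this]

lemma chi_zero {n : ℕ} (r : Fin n → ZMod 2) : chi r 0 = 1 := by simp [chi]

lemma sum_chi {n : ℕ} (r : Fin n → ZMod 2) (hr : r ≠ 0) : ∑ x, chi r x = 0 := by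
  obtain ⟨i, hi⟩ := Function.ne_iff.1 hr
  have h1 : r i = 1 := by rcases z2 (r i) with h | h; exact absurd h hi; exact h
  have h2 : chi r (Pi.single i 1) = -1 := by simp [chi, h1]
  have := Equiv.sum_comp (Equiv.addRight (Pi.single i (1 : ZMod 2))) (fun x => chi r x)
  simp only [Equiv.coe_addRight, chi_add, h2, mul_neg, mul_one, Finset.sum_neg_distrib] at this
  linarith

lemma sum_chi' {n : ℕ} (x : Fin n → ZMod 2) : ∑ r, chi r x = if x = 0 then (2 : ℝ) ^ n else 0 := by
  simp_rw [chi_symm _ x]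
  split_ifs with h
  · subst h; simp_rw [fun r => chi_symm (0 : Fin n → ZMod 2) r, chi_zero]; simp
  · exact sum_chi x h

/-- box -/
lemma cs {α β : Type*} [Fintype α] [Fintype β] (g : α → β → ℝ) :
    (∑ x, ∑ y, g x y) ^ 2 ≤ Fintype.card α * ∑ p : β × β, ∑ x, g x p.1 * g x p.2 := by
  have := @sq_sum_le_card_mul_sum_sq α ℝ _ _ _ _ Finset.univ (fun x => ∑ y, g x y)
  refine this.trans (le_of_eq ?_)
  rw [Finset.sum_comm]
  simp only [Finset.card_univ]
  congr 1
  refine Finset.sum_congr rfl fun x _ => ?_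
  rw [sq, Finset.sum_mul_sum, Fintype.sum_prod_type]

lemma box {α : Type*} [Fintype α] (f : α → α → α → ℝ) (N : ℝ) (hN : N = Fintype.card α)
    (_h0 : 0 ≤ ∑ p : α × α, ∑ c, f p.1 p.2 c) :
    (∑ p : α × α, ∑ c, f p.1 p.2 c) ^ 8 ≤ N ^ 18 * ∑ a : α × α, ∑ q : (α × α) × (α × α),
      (f a.1 q.2.1 q.1.1 * f a.1 q.2.1 q.1.2) * (f a.1 q.2.2 q.1.1 * f a.1 q.2.2 q.1.2) *
      ((f a.2 q.2.1 q.1.1 * f a.2 q.2.1 q.1.2) * (f a.2 q.2.2 q.1.1 * f a.2 q.2.2 q.1.2)) := by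
  have hN0 : 0 ≤ N := by rw [hN]; positivity
  have h1 := cs (fun (p : α × α) c => f p.1 p.2 c)
  have h2 := cs (fun (p : (α × α) × α) b => f p.2 b p.1.1 * f p.2 b p.1.2)
  have h3 := cs (fun (q : (α × α) × (α × α)) a =>
    (f a q.2.1 q.1.1 * f a q.2.1 q.1.2) * (f a q.2.2 q.1.1 * f a q.2.2 q.1.2))
  have e1 : ∑ p : α × α, ∑ x : α × α, f x.1 x.2 p.1 * f x.1 x.2 p.2 =
      ∑ p : (α × α) × α, ∑ b, f p.2 b p.1.1 * f p.2 b p.1.2 := by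
    rw [Fintype.sum_prod_type (f := fun p : (α × α) × α => ∑ b, f p.2 b p.1.1 * f p.2 b p.1.2)]
    refine Finset.sum_congr rfl fun p _ => ?_
    rw [Fintype.sum_prod_type]
  have e2 : ∑ p : α × α, ∑ x : (α × α) × α, (f x.2 p.1 x.1.1 * f x.2 p.1 x.1.2) *
        (f x.2 p.2 x.1.1 * f x.2 p.2 x.1.2) =
      ∑ q : (α × α) × (α × α), ∑ a, 
      (f a q.2.1 q.1.1 * f a q.2.1 q.1.2) * (f a q.2.2 q.1.1 * f a q.2.2 q.1.2) := by
    rw [Fintype.sum_prod_type (f := fun q : (α × α) × (α × α) => ∑ a, 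
      (f a q.2.1 q.1.1 * f a q.2.1 q.1.2) * (f a q.2.2 q.1.1 * f a q.2.2 q.1.2)), Finset.sum_comm']
    rotate_left
    · exact fun _ _ => Iff.rfl
    rw [Fintype.sum_prod_type]
    refine Finset.sum_congr rfl fun p _ => ?_
    rw [Finset.sum_comm]
  rw [e1] at h1
  rw [e2] at h2
  simp only [Fintype.card_prod, Nat.cast_mul, ← hN] at h1 h2 h3
  set S1 := ∑ p : α × α, ∑ c, f p.1 p.2 c
  set S2 := ∑ p : (α × α) × α, ∑ b, f p.2 b p.1.1 * f p.2 b p.1.2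
  set S3 := ∑ q : (α × α) × (α × α), ∑ a, 
      (f a q.2.1 q.1.1 * f a q.2.1 q.1.2) * (f a q.2.2 q.1.1 * f a q.2.2 q.1.2)
  calc S1 ^ 8 = (S1 ^ 2) ^ 4 := by ring
    _ ≤ (N * N * S2) ^ 4 := by gcongr
    _ = N ^ 8 * (S2 ^ 2) ^ 2 := by ring
    _ ≤ N ^ 8 * (N * N * N * S3) ^ 2 := by gcongr
    _ = N ^ 14 * S3 ^ 2 := by ring
    _ ≤ N ^ 14 * (N * N * (N * N) * _) := by gcongr
    _ = _ := by ring

/-- number of dependent tuples -/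
lemma dep_count {n : ℕ} (g : Fin 6 → ZMod 2) (hg : g ≠ 0) :
    (Finset.univ.filter (fun v : Fin 6 → (Fin n → ZMod 2) => ∑ i, g i • v i = 0)).card * 2 ^ n
      ≤ 2 ^ (6 * n) := by
  obtain ⟨i, hi⟩ := Function.ne_iff.1 hg
  have h1 : g i = 1 := by rcases z2 (g i) with h | h; exact absurd h hi; exact h
  have : (2 : ℕ) ^ n = (Finset.univ : Finset (Fin n → ZMod 2)).card := by simp
  rw [this, ← Finset.card_product]
  have h2 : (2 : ℕ) ^ (6 * n) = (Finset.univ : Finset (Fin 6 → (Fin n → ZMod 2))).card := by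
    simp [← pow_mul, mul_comm]
  rw [h2]
  refine Finset.card_le_card_of_injOn (fun p => p.1 + Pi.single i p.2) (fun _ _ => by simp) ?_
  rintro ⟨v, x⟩ hv ⟨w, y⟩ hw he
  simp only [Finset.coe_product, Set.mem_prod, Finset.coe_filter, Finset.mem_univ, true_and,
    Set.mem_ofPred_eq, Finset.coe_univ, Set.mem_univ, and_true] at hv hw he
  have key : ∀ (v : Fin 6 → (Fin n → ZMod 2)) (x : Fin n → ZMod 2), ∑ j, g j • v j = 0 →
      ∑ j, g j • (v + Pi.single i x : Fin 6 → (Fin n → ZMod 2)) j = x := by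
    intro v x hv
    simp only [Pi.add_apply, smul_add, Finset.sum_add_distrib, hv, zero_add]
    rw [Finset.sum_eq_single i]
    · simp [h1]
    · intro b _ hb; simp [Pi.single_eq_of_ne hb]
    · simp
  have hxy : x = y := by rw [← key v x hv, he, key w y hw]
  subst hxy
  simpa using he

lemma exists_indep {n : ℕ} (hn : 80 ≤ n) (S : Finset (Fin 6 → (Fin n → ZMod 2)))
    (hS : (2 : ℕ) ^ (6 * n) ≤ S.card * 2 ^ 64) : ∃ v ∈ S, LinearIndependent (ZMod 2) v := by
  by_contra! hcon
  have hsub : S ⊆ (Finset.univ.filter (fun g : Fin 6 → ZMod 2 => g ≠ 0)).biUnion (fun g =>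
      Finset.univ.filter (fun v : Fin 6 → (Fin n → ZMod 2) => ∑ i, g i • v i = 0)) := by
    intro v hv
    have := hcon v hv
    rw [Fintype.not_linearIndependent_iff] at this
    obtain ⟨g, h1, i, hi⟩ := this
    simp only [Finset.mem_biUnion, Finset.mem_filter, Finset.mem_univ, true_and]
    exact ⟨g, fun h => hi (by simp [h]), h1⟩
  have h1 := (Finset.card_le_card hsub).trans Finset.card_biUnion_le
  have h2 : S.card * 2 ^ n ≤ 64 * 2 ^ (6 * n) := by
    calc S.card * 2 ^ n ≤ _ := Nat.mul_le_mul_right _ h1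
      _ = _ := Finset.sum_mul _ _ _
      _ ≤ ∑ g ∈ Finset.univ.filter (fun g : Fin 6 → ZMod 2 => g ≠ 0), 2 ^ (6 * n) :=
        Finset.sum_le_sum fun g hg => dep_count g (by simpa using hg)
      _ ≤ 64 * 2 ^ (6 * n) := by
        rw [Finset.sum_const, smul_eq_mul]
        gcongr
        exact (Finset.card_filter_le _ _).trans (by simp)
  have h3 : (2 : ℕ) ^ 80 ≤ 2 ^ n := Nat.pow_le_pow_right (by norm_num) hn
  have h4 : 0 < (2 : ℕ) ^ (6 * n) := by positivity
  have h5 : S.card * 2 ^ 80 ≤ S.card * 2 ^ n := Nat.mul_le_mul_left _ h3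
  have h6 : S.card * 2 ^ 80 = (S.card * 2 ^ 64) * 2 ^ 16 := by ring
  omega

lemma add_eq_zero' {n : ℕ} (x y : Fin n → ZMod 2) : x + y = 0 ↔ y = x := by
  constructor
  · intro h
    calc y = x + x + y := by rw [add_self', zero_add]
      _ = x + (x + y) := by abel
      _ = x := by rw [h, add_zero]
  · rintro rfl; exact add_self' _

lemma fourier2 {n : ℕ} (I : (Fin n → ZMod 2) → ℝ) :
    ∑ r, (∑ x, I x * chi r x) ^ 2 = 2 ^ n * ∑ x, I x ^ 2 := by
  have h : ∀ r : Fin n → ZMod 2, (∑ x, I x * chi r x) ^ 2 =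
      ∑ x, ∑ y, I x * I y * chi r (x + y) := by
    intro r
    rw [sq, Finset.sum_mul_sum]
    refine Finset.sum_congr rfl fun x _ => Finset.sum_congr rfl fun y _ => ?_
    rw [chi_add]; ring
  simp_rw [h]
  rw [Finset.sum_comm, Finset.mul_sum]
  refine Finset.sum_congr rfl fun x _ => ?_
  rw [Finset.sum_comm]
  simp_rw [← Finset.mul_sum, sum_chi', add_eq_zero']
  simp; ring

lemma fourier3 {n : ℕ} (I : (Fin n → ZMod 2) → ℝ) :
    ∑ r, (∑ x, I x * chi r x) ^ 3 = 2 ^ n * ∑ x, ∑ y, I x * I y * I (x + y) := by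
  have h : ∀ r : Fin n → ZMod 2, (∑ x, I x * chi r x) ^ 3 =
      ∑ x, ∑ y, ∑ z, I x * I y * I z * chi r (x + y + z) := by
    intro r
    rw [pow_succ, sq, Finset.sum_mul_sum, Finset.sum_mul]
    refine Finset.sum_congr rfl fun x _ => ?_
    rw [Finset.sum_mul]
    refine Finset.sum_congr rfl fun y _ => ?_
    rw [Finset.mul_sum]
    refine Finset.sum_congr rfl fun z _ => ?_
    rw [chi_add, chi_add]; ring
  simp_rw [h]
  rw [Finset.sum_comm, Finset.mul_sum]
  refine Finset.sum_congr rfl fun x _ => ?_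
  rw [Finset.sum_comm, Finset.mul_sum]
  refine Finset.sum_congr rfl fun y _ => ?_
  rw [Finset.sum_comm]
  simp_rw [← Finset.mul_sum, sum_chi', add_eq_zero']
  simp; ring

lemma tri {n : ℕ} (M : Finset (Fin n → ZMod 2)) (I : (Fin n → ZMod 2) → ℝ)
    (hI : ∀ x, I x = if x ∈ M then 1 else 0)
    (hF : ∀ r : Fin n → ZMod 2, r ≠ 0 → -(31 / 64 : ℝ) * 2 ^ n ≤ ∑ x, I x * chi r x)
    (hM : (2 : ℝ) ^ n / 2 ≤ M.card) :
    (2 : ℝ) ^ n * 2 ^ n / 256 ≤ ∑ x, ∑ y, I x * I y * I (x + y) := by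
  have hm : ∑ x, I x = M.card := by simp [hI]
  have hm2 : ∑ x, I x ^ 2 = M.card := by simp [hI]
  have h2 := fourier2 I
  have h3 := fourier3 I
  rw [hm2] at h2
  have c0 : ∀ x : Fin n → ZMod 2, chi 0 x = 1 := fun x => by rw [chi_symm, chi_zero]
  rw [← Finset.add_sum_erase _ _ (Finset.mem_univ (0 : Fin n → ZMod 2))] at h2 h3
  simp only [c0, mul_one, hm] at h2 h3
  have h4 : -(31 / 64 : ℝ) * 2 ^ n * ∑ r ∈ Finset.univ.erase (0 : Fin n → ZMod 2),
      (∑ x, I x * chi r x) ^ 2 ≤ ∑ r ∈ Finset.univ.erase (0 : Fin n → ZMod 2),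
      (∑ x, I x * chi r x) ^ 3 := by
    rw [Finset.mul_sum]
    refine Finset.sum_le_sum fun r hr => ?_
    have := hF r (Finset.ne_of_mem_erase hr)
    rw [pow_succ _ 2, mul_comm _ (∑ x, I x * chi r x)]
    exact mul_le_mul_of_nonneg_right this (sq_nonneg _)
  set N : ℝ := 2 ^ n with hN
  have hNpos : 0 < N := by positivity
  set m : ℝ := (M.card : ℝ)
  set T := ∑ x, ∑ y, I x * I y * I (x + y)
  set A := ∑ r ∈ Finset.univ.erase (0 : Fin n → ZMod 2), (∑ x, I x * chi r x) ^ 2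
  set B := ∑ r ∈ Finset.univ.erase (0 : Fin n → ZMod 2), (∑ x, I x * chi r x) ^ 3
  have hA : A = N * m - m ^ 2 := by linarith
  have h5 : m ^ 3 - (31 / 64) * N * (N * m - m ^ 2) ≤ N * T := by rw [hA] at h4; linarith
  have h6 : N ^ 2 / 128 ≤ m ^ 2 - (31 / 64) * N * (N - m) := by nlinarith
  have h7 : N / 2 * (N ^ 2 / 128) ≤ m * (m ^ 2 - (31 / 64) * N * (N - m)) :=
    mul_le_mul hM h6 (by positivity) (by linarith)
  have h8 : N * (N * N / 256) ≤ N * T := by nlinarith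
  exact le_of_mul_le_mul_left h8 hNpos

lemma case1 {n : ℕ} (hn : 80 ≤ n) (M : Finset (Fin n → ZMod 2))
    (hF : ∀ r : Fin n → ZMod 2, r ≠ 0 →
      -(31 / 64 : ℝ) * 2 ^ n ≤ ∑ x, (if x ∈ M then (1 : ℝ) else 0) * chi r x)
    (hM : (2 : ℝ) ^ n / 2 ≤ M.card) :
    HasRestriction (cycleMatroid octahedron) (M : Set (Fin n → ZMod 2)) := by
  set I : (Fin n → ZMod 2) → ℝ := fun x => if x ∈ M then 1 else 0 with hI
  have hT := tri M I (fun _ => rfl) hF hM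
  have hS1 : ∑ p : (Fin n → ZMod 2) × (Fin n → ZMod 2), ∑ c,
      I (p.1 + p.2) * I (p.1 + c) * I (p.2 + c) = 2 ^ n * ∑ x, ∑ y, I x * I y * I (x + y) := by
    rw [Fintype.sum_prod_type]
    have : ∀ a : Fin n → ZMod 2, ∑ b, ∑ c, I (a + b) * I (a + c) * I (b + c) =
        ∑ x, ∑ y, I x * I y * I (x + y) := by
      intro a
      rw [← Equiv.sum_comp (Equiv.addLeft a)]
      refine Finset.sum_congr rfl fun x _ => ?_
      rw [← Equiv.sum_comp (Equiv.addLeft a)]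
      refine Finset.sum_congr rfl fun y _ => ?_
      simp only [Equiv.coe_addLeft]
      have e1 : a + (a + x) = x := by rw [← add_assoc, add_self', zero_add]
      have e2 : a + (a + y) = y := by rw [← add_assoc, add_self', zero_add]
      have e3 : a + x + (a + y) = x + y := by
        calc _ = (a + a) + (x + y) := by abel
          _ = _ := by rw [add_self', zero_add]
      rw [e1, e2, e3]
    simp_rw [this]
    simp
  obtain ⟨f, hf0⟩ : ∃ f : (Fin n → ZMod 2) → (Fin n → ZMod 2) → (Fin n → ZMod 2) → ℝ,
    ∀ a b c, f a b c = I (a + b) * I (a + c) * I (b + c) := ⟨_, fun _ _ _ => rfl⟩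
  simp only [← hf0] at hS1
  have hb := box f (2 ^ n) (by simp)
    (by rw [hS1]; refine mul_nonneg (by positivity) (le_trans (by positivity) hT))
  rw [hS1] at hb
  -- the set of hom tuples
  set S : Finset (Fin 6 → (Fin n → ZMod 2)) := Finset.univ.filter
    (fun v => ∀ i j : Fin 6, (i : ℕ) / 2 < (j : ℕ) / 2 → v i + v j ∈ M) with hS
  set Q := ∑ a : (Fin n → ZMod 2) × (Fin n → ZMod 2),
    ∑ q : ((Fin n → ZMod 2) × (Fin n → ZMod 2)) × ((Fin n → ZMod 2) × (Fin n → ZMod 2)),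
      (f a.1 q.2.1 q.1.1 * f a.1 q.2.1 q.1.2) * (f a.1 q.2.2 q.1.1 * f a.1 q.2.2 q.1.2) *
      ((f a.2 q.2.1 q.1.1 * f a.2 q.2.1 q.1.2) * (f a.2 q.2.2 q.1.1 * f a.2 q.2.2 q.1.2)) with hQ
  have hQS : Q ≤ S.card := by
    rw [hQ, ← Fintype.sum_prod_type']
    simp only [hf0]
    let e : ((Fin n → ZMod 2) × (Fin n → ZMod 2)) ×
      (((Fin n → ZMod 2) × (Fin n → ZMod 2)) × ((Fin n → ZMod 2) × (Fin n → ZMod 2))) →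
      (Fin 6 → (Fin n → ZMod 2)) := fun t =>
        ![t.1.1, t.1.2, t.2.2.1, t.2.2.2, t.2.1.1, t.2.1.2]
    have he : Function.Injective e := by
      rintro ⟨⟨a, b⟩, ⟨c, d⟩, ⟨x, y⟩⟩ ⟨⟨a', b'⟩, ⟨c', d'⟩, ⟨x', y'⟩⟩ h
      have := fun i => congrFun h i
      have h0 := this 0; have h1 := this 1; have h2 := this 2
      have h3 := this 3; have h4 := this 4; have h5 := this 5
      simp [e] at h0 h1 h2 h3 h4 h5
      simp [h0, h1, h2, h3, h4, h5]
    calc _ ≤ ∑ t, (if e t ∈ S then (1 : ℝ) else 0) := by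
          refine Finset.sum_le_sum fun t _ => ?_
          have I01 : ∀ x, 0 ≤ I x ∧ I x ≤ 1 := by
            intro x; simp only [hI]; split_ifs <;> norm_num
          have hm : ∀ x, x ∉ M → I x = 0 := fun x hx => by simp [hI, hx]
          by_cases hall : e t ∈ S
          · rw [if_pos hall]
            have hf : ∀ a b c, 0 ≤ I (a + b) * I (a + c) * I (b + c) ∧
                I (a + b) * I (a + c) * I (b + c) ≤ 1 := fun a b c =>
              ⟨mul_nonneg (mul_nonneg (I01 _).1 (I01 _).1) (I01 _).1,
               mul_le_one₀ (mul_le_one₀ (I01 _).2 (I01 _).1 (I01 _).2) (I01 _).1 (I01 _).2⟩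
            have h2 : ∀ x y : ℝ, (0 ≤ x ∧ x ≤ 1) → (0 ≤ y ∧ y ≤ 1) → (0 ≤ x * y ∧ x * y ≤ 1) :=
              fun x y hx hy => ⟨mul_nonneg hx.1 hy.1, mul_le_one₀ hx.2 hy.1 hy.2⟩
            exact (h2 _ _ (h2 _ _ (h2 _ _ (hf _ _ _) (hf _ _ _)) (h2 _ _ (hf _ _ _) (hf _ _ _)))
              (h2 _ _ (h2 _ _ (hf _ _ _) (hf _ _ _)) (h2 _ _ (hf _ _ _) (hf _ _ _)))).2
          · rw [if_neg hall]
            simp only [hS, Finset.mem_filter, Finset.mem_univ, true_and, not_forall] at hall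
            obtain ⟨i, j, hij, hh⟩ := hall
            have := hm _ hh
            obtain ⟨⟨a, b⟩, ⟨c, d⟩, ⟨x, y⟩⟩ := t
            fin_cases i <;> fin_cases j <;> first
              | (exfalso; revert hij; decide)
              | (simp [e] at this; simp [this])
      _ = ((Finset.univ.filter (fun t => e t ∈ S)).card : ℝ) := by simp
      _ ≤ S.card := by
        norm_cast
        exact Finset.card_le_card_of_injOn e (fun t ht => by simpa using ht) he.injOn
  have hcard : (2 : ℕ) ^ (6 * n) ≤ S.card * 2 ^ 64 := by
    set N : ℝ := 2 ^ n with hN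
    have hNpos : 0 < N := by positivity
    have h1 : (N * (N * N / 256)) ^ 8 ≤ N ^ 18 * S.card := by
      refine (pow_le_pow_left₀ (by positivity) (mul_le_mul_of_nonneg_left hT hNpos.le) 8).trans
        (hb.trans ?_)
      exact mul_le_mul_of_nonneg_left hQS (by positivity)
    have h2 : N ^ 18 * (N ^ 6) ≤ N ^ 18 * (S.card * 2 ^ 64) := by
      calc N ^ 18 * (N ^ 6) = (N * (N * N / 256)) ^ 8 * 2 ^ 64 := by ring
        _ ≤ N ^ 18 * S.card * 2 ^ 64 := by gcongr
        _ = _ := by ring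
    have h3 := le_of_mul_le_mul_left h2 (by positivity)
    have h4 : ((2 ^ (6 * n) : ℕ) : ℝ) ≤ ((S.card * 2 ^ 64 : ℕ) : ℝ) := by
      rw [Nat.cast_mul, Nat.cast_pow, Nat.cast_pow, Nat.cast_ofNat, mul_comm 6 n, pow_mul]
      exact h3
    exact_mod_cast h4
  obtain ⟨v, hv, hli⟩ := exists_indep hn S hcard
  refine embed _ v hli ?_
  simpa [hS] using hv

lemma card_half {n : ℕ} (r : Fin n → ZMod 2) (hr : r ≠ 0) :
    2 * (Finset.univ.filter (fun x : Fin n → ZMod 2 => ¬ r ⬝ᵥ x = 0)).card = 2 ^ n := by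
  have h1 := sum_chi r hr
  have h2 := Finset.card_filter_add_card_filter_not (s := (Finset.univ : Finset (Fin n → ZMod 2)))
    (fun x : Fin n → ZMod 2 => r ⬝ᵥ x = 0)
  have h3 : (Finset.univ : Finset (Fin n → ZMod 2)).card = 2 ^ n := by simp
  simp only [chi, Finset.sum_ite, Finset.sum_const, nsmul_eq_mul, mul_one, mul_neg] at h1
  have h4 : ((Finset.univ.filter (fun x : Fin n → ZMod 2 => r ⬝ᵥ x = 0)).card : ℝ) =
    (Finset.univ.filter (fun x : Fin n → ZMod 2 => ¬ r ⬝ᵥ x = 0)).card := by linarith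
  have h5 := Nat.cast_injective h4
  omega

lemma pickq {n : ℕ} (r : Fin n → ZMod 2) (hr : r ≠ 0) (M : Finset (Fin n → ZMod 2))
    (hE : 64 * (Finset.univ.filter (fun x : Fin n → ZMod 2 => ¬ r ⬝ᵥ x = 0 ∧ x ∉ M)).card ≤ 2 ^ n)
    (w : Fin 6 → (Fin n → ZMod 2)) (hw : ∀ i, r ⬝ᵥ w i = 0) :
    ∃ q, ¬ r ⬝ᵥ q = 0 ∧ ∀ i j : Fin 6, i < j → w i + w j + q ∈ M := by
  by_contra! hcon
  set E := Finset.univ.filter (fun x : Fin n → ZMod 2 => ¬ r ⬝ᵥ x = 0 ∧ x ∉ M) with hEd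
  have hsub : Finset.univ.filter (fun x : Fin n → ZMod 2 => ¬ r ⬝ᵥ x = 0) ⊆
      (Finset.univ.filter (fun p : Fin 6 × Fin 6 => p.1 < p.2)).biUnion
        (fun p => E.image (fun x => w p.1 + w p.2 + x)) := by
    intro q hq
    simp only [Finset.mem_filter, Finset.mem_univ, true_and] at hq
    obtain ⟨i, j, hij, h⟩ := hcon q hq
    simp only [Finset.mem_biUnion, Finset.mem_filter, Finset.mem_univ, true_and, Finset.mem_image]
    refine ⟨(i, j), hij, w i + w j + q, ?_, ?_⟩
    · simp [hEd, h, dotProduct_add, hw, hq]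
    · rw [← add_assoc, add_self', zero_add]
  have h1 := (Finset.card_le_card hsub).trans Finset.card_biUnion_le
  have h2 := h1.trans (Finset.sum_le_card_nsmul _ _ E.card (fun p _ => Finset.card_image_le))
  have h3 : (Finset.univ.filter (fun p : Fin 6 × Fin 6 => p.1 < p.2)).card = 15 := by decide
  rw [h3, smul_eq_mul] at h2
  have h4 := card_half r hr
  have h5 : 0 < 2 ^ n := by positivity
  omega

lemma finish {n : ℕ} (r : Fin n → ZMod 2) (hr : r ≠ 0) (M : Finset (Fin n → ZMod 2))
    (hE : 64 * (Finset.univ.filter (fun x : Fin n → ZMod 2 => ¬ r ⬝ᵥ x = 0 ∧ x ∉ M)).card ≤ 2 ^ n)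
    (w : Fin 6 → (Fin n → ZMod 2)) (hw : ∀ i, r ⬝ᵥ w i = 0) (hli : LinearIndependent (ZMod 2) w)
    (c : Fin 6 → ZMod 2)
    (hc : ∀ i j : Fin 6, (i : ℕ) / 2 < (j : ℕ) / 2 → c i = c j → w i + w j ∈ M) :
    HasRestriction (cycleMatroid octahedron) (M : Set (Fin n → ZMod 2)) := by
  obtain ⟨q, hq, hq2⟩ := pickq r hr M hE w hw
  refine embed _ (fun i => w i + c i • q) ?_ ?_
  · rw [Fintype.linearIndependent_iff] at hli ⊢
    intro g hg
    have e : ∑ i, g i • (w i + c i • q) = ∑ i, g i • w i + (∑ i, g i * c i) • q := by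
      simp only [smul_add, Finset.sum_add_distrib, Finset.sum_smul, smul_smul]
    rw [e] at hg
    have h1 : r ⬝ᵥ (∑ i, g i • w i) = 0 := by
      rw [dotProduct_sum]
      refine Finset.sum_eq_zero fun i _ => ?_
      rw [dotProduct_smul, hw, smul_zero]
    have h2 : (∑ i, g i * c i) = 0 := by
      have := congrArg (fun x => r ⬝ᵥ x) hg
      simp only [dotProduct_add, h1, dotProduct_smul, zero_add, dotProduct_zero, smul_eq_mul] at this
      rcases mul_eq_zero.1 this with h | h
      · exact h
      · exact absurd h hq
    rw [h2, zero_smul, add_zero] at hg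
    exact hli g hg
  · intro i j hij
    have hlt : i < j := by rw [Fin.lt_def]; omega
    have h2 := add_self' q
    rcases z2 (c i) with h | h <;> rcases z2 (c j) with h' | h' <;>
      simp only [h, h', zero_smul, one_smul, add_zero, Finset.mem_coe]
    · exact hc i j hij (by rw [h, h'])
    · rw [← add_assoc]; exact hq2 i j hlt
    · rw [add_right_comm]; exact hq2 i j hlt
    · have : w i + q + (w j + q) = w i + w j := by linear_combination (exp := 1) h2
      rw [this]
      exact hc i j hij (by rw [h, h'])

lemma extend {n k : ℕ} (r : Fin n → ZMod 2) (d : Fin k → (Fin n → ZMod 2))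
    (hk : k + 2 ≤ n) (hd : LinearIndependent (ZMod 2) d) :
    ∃ x, r ⬝ᵥ x = 0 ∧ LinearIndependent (ZMod 2) (Fin.cons x d : Fin (k + 1) → (Fin n → ZMod 2)) := by
  by_contra! hcon
  let f : (Fin n → ZMod 2) →ₗ[ZMod 2] ZMod 2 := dotProductBilin (ZMod 2) (ZMod 2) r
  have hf : ∀ x, f x = r ⬝ᵥ x := fun x => rfl
  have hle : LinearMap.ker f ≤ Submodule.span (ZMod 2) (Set.range d) := by
    intro x hx
    by_contra hx2
    exact hcon x hx (linearIndependent_finCons.2 ⟨hd, hx2⟩)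
  have h1 := Submodule.finrank_mono hle
  have h2 : Module.finrank (ZMod 2) (Submodule.span (ZMod 2) (Set.range d)) ≤ k := by
    exact (finrank_range_le_card (R := ZMod 2) d).trans (by simp)
  have h3 := LinearMap.finrank_range_add_finrank_ker f
  have h4 : Module.finrank (ZMod 2) (LinearMap.range f) ≤ 1 := by
    simpa using Submodule.finrank_le (LinearMap.range f)
  simp at h3
  omega

lemma triple {n : ℕ} (a b c : Fin n → ZMod 2) (ha : a ≠ 0) (hb : b ≠ 0) (hc : c ≠ 0)
    (hab : a ≠ b) (hac : a ≠ c) (hbc : b ≠ c) (h : c ≠ a + b) :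
    LinearIndependent (ZMod 2) ![a, b, c] := by
  rw [Fintype.linearIndependent_iff]
  intro g hg
  simp only [Fin.sum_univ_three, Matrix.cons_val] at hg
  have := add_eq_zero' a b
  have := add_eq_zero' a c
  have := add_eq_zero' b c
  have := add_eq_zero' (a + b) c
  have key : g 0 = 0 ∧ g 1 = 0 ∧ g 2 = 0 := by
    rcases z2 (g 0) with h0 | h0 <;> rcases z2 (g 1) with h1 | h1 <;> rcases z2 (g 2) with h2 | h2 <;>
      simp only [h0, h1, h2, zero_smul, one_smul, add_zero, zero_add] at hg ⊢ <;> simp_all [eq_comm]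
  intro i; fin_cases i
  exacts [key.1, key.2.1, key.2.2]

lemma dich {n : ℕ} (D : Finset (Fin n → ZMod 2)) (h0 : 0 ∉ D) (h5 : 5 ≤ D.card) :
    ∃ a b c, a ∈ D ∧ b ∈ D ∧ c ∈ D ∧ LinearIndependent (ZMod 2) ![a, b, c] ∧
      (a + b + c ∈ D ∨ ∃ d ∈ D, LinearIndependent (ZMod 2) (Fin.cons d ![a, b, c] : Fin 4 → (Fin n → ZMod 2))) := by
  have pick : ∀ S : Finset (Fin n → ZMod 2), S.card < 5 → ∃ x ∈ D, x ∉ S := by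
    intro S hS
    exact Finset.exists_mem_notMem_of_card_lt_card (by omega)
  have ne : ∀ x ∈ D, x ≠ 0 := fun x hx h => h0 (h ▸ hx)
  obtain ⟨a, ha, -⟩ := pick ∅ (by simp)
  obtain ⟨b, hb, hb'⟩ := pick {a} (by simp)
  obtain ⟨c, hc, hc'⟩ := pick {a, b, a + b} (Finset.card_le_three.trans_lt (by norm_num))
  simp only [Finset.mem_insert, Finset.mem_singleton, not_or] at hb' hc'
  have hli := triple a b c (ne a ha) (ne b hb) (ne c hc) (Ne.symm hb') (Ne.symm hc'.1)
    (Ne.symm hc'.2.1) hc'.2.2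
  by_cases hI : ∃ d ∈ D, LinearIndependent (ZMod 2) (Fin.cons d ![a, b, c] : Fin 4 → (Fin n → ZMod 2))
  · exact ⟨a, b, c, ha, hb, hc, hli, Or.inr hI⟩
  push Not at hI
  by_cases habc : a + b + c ∈ D
  · exact ⟨a, b, c, ha, hb, hc, hli, Or.inl habc⟩
  have hsp : ∀ d ∈ D, d ≠ a → d ≠ b → d ≠ c → d = a + b ∨ d = a + c ∨ d = b + c := by
    intro d hd h1 h2 h3
    have : d ∈ Submodule.span (ZMod 2) (Set.range ![a, b, c]) := by
      by_contra hx
      exact hI d hd (linearIndependent_finCons.2 ⟨hli, hx⟩)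
    rw [Submodule.mem_span_range_iff_exists_fun] at this
    obtain ⟨g, hg⟩ := this
    simp only [Fin.sum_univ_three, Matrix.cons_val] at hg
    rcases z2 (g 0) with h0 | h0 <;> rcases z2 (g 1) with h1' | h1' <;> rcases z2 (g 2) with h2' | h2' <;>
      simp only [h0, h1', h2', zero_smul, one_smul, add_zero, zero_add] at hg
    · exact absurd hg.symm (ne d hd)
    · exact absurd hg.symm h3
    · exact absurd hg.symm h2
    · exact Or.inr (Or.inr hg.symm)
    · exact absurd hg.symm h1
    · exact Or.inr (Or.inl hg.symm)
    · exact Or.inl hg.symm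
    · exact absurd (hg ▸ hd) habc
  obtain ⟨d, hd, hd'⟩ := pick {a, b, c} (Finset.card_le_three.trans_lt (by norm_num))
  obtain ⟨e, he, he'⟩ := pick {a, b, c, d} (Finset.card_le_four.trans_lt (by norm_num))
  simp only [Finset.mem_insert, Finset.mem_singleton, not_or] at hd' he'
  have hA := add_self' a
  have hB := add_self' b
  have hC := add_self' c
  have na := ne a ha
  have nb := ne b hb
  have nc := ne c hc
  -- two distinct pair sums `s + x`, `s + y` in `D`
  have fin : ∀ s x y, s ∈ D → x ∈ D → y ∈ D → s + x ∈ D → s + y ∈ D → s ≠ 0 → x ≠ 0 → y ≠ 0 →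
      LinearIndependent (ZMod 2) ![s, x, y] →
      ∃ a b c, a ∈ D ∧ b ∈ D ∧ c ∈ D ∧ LinearIndependent (ZMod 2) ![a, b, c] ∧
      (a + b + c ∈ D ∨ ∃ d ∈ D, LinearIndependent (ZMod 2)
        (Fin.cons d ![a, b, c] : Fin 4 → (Fin n → ZMod 2))) := by
    intro s x y hs hx hy hsx hsy ns nx ny hl
    refine ⟨x, y, s + x, hx, hy, hsx, ?_, Or.inl ?_⟩
    · rw [Fintype.linearIndependent_iff] at hl ⊢
      intro g hg
      have := hl ![g 2, g 0 + g 2, g 1] (by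
        simp only [Fin.sum_univ_three, Matrix.cons_val] at hg ⊢
        rw [← hg]; module)
      have t0 := this 0; have t1 := this 1; have t2 := this 2
      simp only [Matrix.cons_val] at t0 t1 t2
      rw [t0, add_zero] at t1
      intro i; fin_cases i
      exacts [t1, t2, t0]
    · have : x + y + (s + x) = s + y := by linear_combination (exp := 1) add_self' x
      rw [this]; exact hsy
  have p1 : LinearIndependent (ZMod 2) ![b, a, c] :=
    triple b a c nb na nc hb' (Ne.symm hc'.2.1) (Ne.symm hc'.1) (by rw [add_comm]; exact hc'.2.2)
  have p2 : LinearIndependent (ZMod 2) ![c, a, b] := by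
    refine triple c a b nc na nb hc'.1 hc'.2.1 (Ne.symm hb') ?_
    intro h; apply hc'.2.2; linear_combination (exp := 1) h + add_self' c - hB
  rcases hsp d hd hd'.1 hd'.2.1 hd'.2.2 with h1 | h1 | h1 <;>
  rcases hsp e he he'.1 he'.2.1 he'.2.2.1 with h2 | h2 | h2 <;>
  first
  | exact absurd (h2.trans h1.symm) he'.2.2.2
  | skip
  all_goals rw [h1] at hd; rw [h2] at he
  · exact fin a b c ha hb hc hd he na nb nc hli
  · exact fin b a c hb ha hc (by rwa [add_comm]) he nb na nc p1
  · exact fin a b c ha hb hc he hd na nb nc hli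
  · exact fin c a b hc ha hb (by rwa [add_comm]) (by rwa [add_comm]) nc na nb p2
  · exact fin b a c hb ha hc (by rwa [add_comm]) hd nb na nc p1
  · exact fin c a b hc ha hb (by rwa [add_comm]) (by rwa [add_comm]) nc na nb p2

lemma case2 {n : ℕ} (hn : 80 ≤ n) (r : Fin n → ZMod 2) (hr : r ≠ 0) (M : Finset (Fin n → ZMod 2))
    (h0 : 0 ∉ M)
    (hF : ∑ x, (if x ∈ M then (1 : ℝ) else 0) * chi r x ≤ -(31 / 64 : ℝ) * 2 ^ n)
    (hM : 2 ^ n + 10 ≤ 2 * M.card) :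
    HasRestriction (cycleMatroid octahedron) (M : Set (Fin n → ZMod 2)) := by
  set D := M.filter (fun x => r ⬝ᵥ x = 0) with hD
  have hs : ∑ x, (if x ∈ M then (1 : ℝ) else 0) * chi r x =
      D.card - (M.filter (fun x => ¬ r ⬝ᵥ x = 0)).card := by
    simp only [ite_mul, one_mul, zero_mul, Finset.sum_ite_mem, Finset.univ_inter]
    simp only [chi, Finset.sum_ite, Finset.sum_const, nsmul_eq_mul, mul_one, mul_neg]
    rw [← hD]; ring
  have h1 : D.card + (M.filter (fun x => ¬ r ⬝ᵥ x = 0)).card = M.card :=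
    Finset.card_filter_add_card_filter_not _
  have h2 := card_half r hr
  have h3 : (M.filter (fun x => ¬ r ⬝ᵥ x = 0)).card +
      (Finset.univ.filter (fun x : Fin n → ZMod 2 => ¬ r ⬝ᵥ x = 0 ∧ x ∉ M)).card =
      (Finset.univ.filter (fun x : Fin n → ZMod 2 => ¬ r ⬝ᵥ x = 0)).card := by
    rw [← Finset.card_filter_add_card_filter_not (s := Finset.univ.filter
      (fun x : Fin n → ZMod 2 => ¬ r ⬝ᵥ x = 0)) (fun x => x ∈ M)]
    congr 2 
    · ext x; simp [and_comm]
    · ext x; simp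
  have h4 : 31 * 2 ^ n ≤ 64 * (M.filter (fun x => ¬ r ⬝ᵥ x = 0)).card := by
    rw [hs] at hF
    have h5 : (0 : ℝ) ≤ D.card := by positivity
    have h6 : (31 * 2 ^ n : ℝ) ≤ 64 * (M.filter (fun x => ¬ r ⬝ᵥ x = 0)).card := by linarith
    exact_mod_cast h6
  have hE : 64 * (Finset.univ.filter
      (fun x : Fin n → ZMod 2 => ¬ r ⬝ᵥ x = 0 ∧ x ∉ M)).card ≤ 2 ^ n := by omega
  have h5 : 5 ≤ D.card := by omega
  obtain ⟨a, b, c, ha, hb, hc, hli, hor⟩ := dich D (by simp [hD, h0]) h5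
  have hDM : ∀ x ∈ D, x ∈ M ∧ r ⬝ᵥ x = 0 := fun x hx => by simpa [hD] using hx
  obtain ⟨ha, ra⟩ := hDM a ha
  obtain ⟨hb, rb⟩ := hDM b hb
  obtain ⟨hc, rc⟩ := hDM c hc
  rcases hor with habc | ⟨d, hd, hli4⟩
  · obtain ⟨z, rz, hz⟩ := extend r _ (by omega) hli
    obtain ⟨y, ry, hy⟩ := extend r _ (by omega) hz
    obtain ⟨t, rt, ht⟩ := extend r _ (by omega) hy
    have habc := (hDM _ habc).1
    refine finish r hr M hE ![z, z + a + c, z + a, z + b, y, t] ?_ ?_ ![0, 0, 0, 0, 1, 1] ?_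
    · intro i; fin_cases i <;> simp [dotProduct_add, ra, rb, rc, rz, ry, rt]
    · rw [Fintype.linearIndependent_iff] at ht ⊢
      intro g hg
      have := ht ![g 5, g 4, g 0 + g 1 + g 2 + g 3, g 1 + g 2, g 3, g 1] (by
        rw [← hg]
        simp [Fin.sum_univ_succ]
        module)
      have t0 := this 0; have t1 := this 1; have t2 := this 2
      have t3 := this 3; have t4 := this 4; have t5 := this 5
      simp only [Matrix.cons_val] at t0 t1 t2 t3 t4 t5
      rw [t5, zero_add] at t3
      rw [t5, t3, t4, add_zero, add_zero, add_zero] at t2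
      intro i; fin_cases i
      exacts [t2, t5, t3, t4, t1, t0]
    · have z2 := add_self' z
      have a2 := add_self' a
      have e1 : z + (z + a) = a := by linear_combination (exp := 1) z2
      have e2 : z + (z + b) = b := by linear_combination (exp := 1) z2
      have e3 : z + a + c + (z + a) = c := by linear_combination (exp := 1) z2 + a2
      have e4 : z + a + c + (z + b) = a + b + c := by linear_combination (exp := 1) z2
      intro i j hij hcc
      fin_cases i <;> fin_cases j <;> first
        | (exfalso; revert hij; decide)
        | (exfalso; revert hcc; decide)
        | (simp [e1, e2, e3, e4, ha, hb, hc, habc])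
  · obtain ⟨hd, rd⟩ := hDM d hd
    obtain ⟨z, rz, hz⟩ := extend r _ (by omega) hli4
    obtain ⟨y, ry, hy⟩ := extend r _ (by omega) hz
    refine finish r hr M hE ![z + a, z + b, z, y, y + c, y + d] ?_ ?_ ![0, 0, 0, 1, 1, 1] ?_
    · intro i; fin_cases i <;> simp [dotProduct_add, ra, rb, rc, rz, ry, rd]
    · rw [Fintype.linearIndependent_iff] at hy ⊢
      intro g hg
      have := hy ![g 3 + g 4 + g 5, g 0 + g 1 + g 2, g 5, g 0, g 1, g 4] (by
        rw [← hg]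
        simp [Fin.sum_univ_succ]
        module)
      have t0 := this 0; have t1 := this 1; have t2 := this 2
      have t3 := this 3; have t4 := this 4; have t5 := this 5
      simp only [Matrix.cons_val] at t0 t1 t2 t3 t4 t5
      rw [t5, t2, add_zero, add_zero] at t0
      rw [t3, t4, zero_add, zero_add] at t1
      intro i; fin_cases i
      exacts [t3, t4, t1, t0, t5, t2]
    · have z2 := add_self' z
      have y2 := add_self' y
      have e1 : z + a + z = a := by linear_combination (exp := 1) z2
      have e2 : z + b + z = b := by linear_combination (exp := 1) z2
      have e3 : y + (y + c) = c := by linear_combination (exp := 1) y2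
      have e4 : y + (y + d) = d := by linear_combination (exp := 1) y2
      intro i j hij hcc
      fin_cases i <;> fin_cases j <;> first
        | (exfalso; revert hij; decide)
        | (exfalso; revert hcc; decide)
        | (simp [e1, e2, e3, e4, ha, hb, hc, hd])

lemma upper {n : ℕ} (hn : 80 ≤ n) (M : Finset (Fin n → ZMod 2)) (h0 : 0 ∉ M)
    (hM : 2 ^ n + 10 ≤ 2 * M.card) :
    HasRestriction (cycleMatroid octahedron) (M : Set (Fin n → ZMod 2)) := by
  by_cases h : ∀ r : Fin n → ZMod 2, r ≠ 0 →
      -(31 / 64 : ℝ) * 2 ^ n ≤ ∑ x, (if x ∈ M then (1 : ℝ) else 0) * chi r x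
  · refine case1 hn M h ?_
    have : (2 ^ n + 10 : ℝ) ≤ 2 * M.card := by exact_mod_cast hM
    linarith
  · push Not at h
    obtain ⟨r, hr, hF⟩ := h
    exact case2 hn r hr M h0 hF.le hM

/-- candidate quadruples of edges -/
def cand : List ((Fin 6 × Fin 6) × (Fin 6 × Fin 6) × (Fin 6 × Fin 6) × (Fin 6 × Fin 6)) :=
  let cyc := fun (i j k l : Fin 6) => ((i, j), (j, k), (k, l), (l, i))
  let pth := fun (i j k l m o : Fin 6) => ((i, j), (j, k), (l, m), (m, o))
  [cyc 0 2 1 3, cyc 0 4 1 5, cyc 2 4 3 5,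
   cyc 0 2 1 4, cyc 0 2 1 5, cyc 0 3 1 4, cyc 0 3 1 5,
   cyc 2 0 3 4, cyc 2 0 3 5, cyc 2 1 3 4, cyc 2 1 3 5,
   cyc 4 0 5 2, cyc 4 0 5 3, cyc 4 1 5 2, cyc 4 1 5 3,
   pth 0 2 1 4 3 5, pth 0 3 1 4 2 5, pth 0 4 1 2 5 3, pth 0 5 1 2 4 3,
   pth 2 0 3 4 1 5, pth 2 1 3 4 0 5,
   pth 0 2 4 1 3 5, pth 0 2 5 1 3 4, pth 0 3 4 1 2 5, pth 0 3 5 1 2 4]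

def ev (p : Fin 6 × Fin 6) : Fin 6 → ZMod 2 := Pi.single p.1 1 + Pi.single p.2 1

set_option maxRecDepth 100000 in
lemma colour : ∀ c0 c1 c2 c3 c4 c5 : ZMod 2, ∃ t ∈ cand,
    let c : Fin 6 → ZMod 2 := ![c0, c1, c2, c3, c4, c5]
    c t.1.1 = c t.1.2 ∧ c t.2.1.1 = c t.2.1.2 ∧ c t.2.2.1.1 = c t.2.2.1.2 ∧
      c t.2.2.2.1 = c t.2.2.2.2 := by decide

set_option maxRecDepth 100000 in
lemma cand_adj : ∀ t ∈ cand, ((t.1.1 : ℕ) / 2 ≠ (t.1.2 : ℕ) / 2) ∧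
    ((t.2.1.1 : ℕ) / 2 ≠ (t.2.1.2 : ℕ) / 2) ∧ ((t.2.2.1.1 : ℕ) / 2 ≠ (t.2.2.1.2 : ℕ) / 2) ∧
    ((t.2.2.2.1 : ℕ) / 2 ≠ (t.2.2.2.2 : ℕ) / 2) := by
  have h : (cand.all fun t => decide (((t.1.1 : ℕ) / 2 ≠ (t.1.2 : ℕ) / 2) ∧
    ((t.2.1.1 : ℕ) / 2 ≠ (t.2.1.2 : ℕ) / 2) ∧ ((t.2.2.1.1 : ℕ) / 2 ≠ (t.2.2.1.2 : ℕ) / 2) ∧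
    ((t.2.2.2.1 : ℕ) / 2 ≠ (t.2.2.2.2 : ℕ) / 2))) = true := by decide
  rw [List.all_eq_true] at h
  exact fun t ht => of_decide_eq_true (h t ht)

set_option maxRecDepth 100000 in
lemma cand_good : ∀ t ∈ cand,
    let x := ev t.1; let y := ev t.2.1; let z := ev t.2.2.1; let w := ev t.2.2.2
    (x ≠ y ∧ x ≠ z ∧ x ≠ w ∧ y ≠ z ∧ y ≠ w ∧ z ≠ w) ∧
    (x + y + z + w = 0 ∨ (x + y + z ≠ 0 ∧ x + y + w ≠ 0 ∧ x + z + w ≠ 0 ∧ y + z + w ≠ 0)) := by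
  have h : (cand.all fun t =>
    let x := ev t.1; let y := ev t.2.1; let z := ev t.2.2.1; let w := ev t.2.2.2
    decide ((x ≠ y ∧ x ≠ z ∧ x ≠ w ∧ y ≠ z ∧ y ≠ w ∧ z ≠ w) ∧
    (x + y + z + w = 0 ∨ (x + y + z ≠ 0 ∧ x + y + w ≠ 0 ∧ x + z + w ≠ 0 ∧ y + z + w ≠ 0)))) = true := by decide
  rw [List.all_eq_true] at h
  exact fun t ht => of_decide_eq_true (h t ht)

/-- four distinct elements of the special set -/
lemma four {n : ℕ} (a b c : Fin n → ZMod 2) (x y z w : Fin n → ZMod 2)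
    (hx : x = a ∨ x = b ∨ x = c ∨ x = a + b) (hy : y = a ∨ y = b ∨ y = c ∨ y = a + b)
    (hz : z = a ∨ z = b ∨ z = c ∨ z = a + b) (hw : w = a ∨ w = b ∨ w = c ∨ w = a + b)
    (h : x ≠ y ∧ x ≠ z ∧ x ≠ w ∧ y ≠ z ∧ y ≠ w ∧ z ≠ w) :
    x + y + z + w = c ∧ (x + y + z = 0 ∨ x + y + w = 0 ∨ x + z + w = 0 ∨ y + z + w = 0) := by
  have hA := add_self' a
  have hB := add_self' b
  have hab : ∀ u v s : Fin n → ZMod 2, u + v + s = a + b + (a + b) → u + v + s = 0 := by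
    intro u v s h; rw [h, add_self']
  have key : x + y + z + w = c + (a + b + (a + b)) ∧
    (x + y + z = a + b + (a + b) ∨ x + y + w = a + b + (a + b) ∨ x + z + w = a + b + (a + b) ∨
      y + z + w = a + b + (a + b)) := by
    obtain ⟨h1, h2, h3, h4, h5, h6⟩ := h
    rcases hx with rfl | rfl | rfl | rfl <;> rcases hy with rfl | rfl | rfl | rfl <;>
    first
    | exact absurd rfl h1
    | skip
    all_goals
      rcases hz with rfl | rfl | rfl | rfl <;>
      first
      | exact absurd rfl h2
      | exact absurd rfl h4
      | skip
    all_goals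
      rcases hw with rfl | rfl | rfl | rfl <;>
      first
      | exact absurd rfl h3
      | exact absurd rfl h5
      | exact absurd rfl h6
      | (refine ⟨by abel1, Or.inl ?_⟩; abel1)
      | (refine ⟨by abel1, Or.inr (Or.inl ?_)⟩; abel1)
      | (refine ⟨by abel1, Or.inr (Or.inr (Or.inl ?_))⟩; abel1)
      | (refine ⟨by abel1, Or.inr (Or.inr (Or.inr ?_))⟩; abel1)
  rw [add_self' (a + b), add_zero] at key
  exact key

lemma lower_free {n : ℕ} (r a b c : Fin n → ZMod 2) (hc : c ≠ 0) (M : Set (Fin n → ZMod 2))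
    (hM : ∀ x ∈ M, r ⬝ᵥ x = 0 → x = a ∨ x = b ∨ x = c ∨ x = a + b) :
    ¬ HasRestriction (cycleMatroid octahedron) M := by
  rintro ⟨ψ, hψ, hsub⟩
  let col : Fin 6 → ZMod 2 := fun i => r ⬝ᵥ ψ (Pi.single i 1)
  obtain ⟨t, ht, hcol⟩ := colour (col 0) (col 1) (col 2) (col 3) (col 4) (col 5)
  have hcv : ![col 0, col 1, col 2, col 3, col 4, col 5] = col := by
    ext i; fin_cases i <;> rfl
  simp only [hcv] at hcol
  have hadj := cand_adj t ht
  have hgood := cand_good t ht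
  simp only at hgood
  have mem : ∀ p : Fin 6 × Fin 6, (p.1 : ℕ) / 2 ≠ (p.2 : ℕ) / 2 → col p.1 = col p.2 →
      ψ (ev p) = a ∨ ψ (ev p) = b ∨ ψ (ev p) = c ∨ ψ (ev p) = a + b := by
    intro p hp hcp
    apply hM
    · apply hsub
      refine ⟨ev p, ⟨p.1, p.2, ?_, rfl⟩, rfl⟩
      rw [octahedron, SimpleGraph.fromRel_adj]
      refine ⟨fun h => hp (by rw [h]), Or.inl hp⟩
    · rw [ev, map_add, dotProduct_add]
      change col p.1 + col p.2 = 0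
      rw [hcp]; generalize col p.2 = s; revert s; decide
  have h4 := four a b c _ _ _ _ (mem t.1 hadj.1 hcol.1) (mem t.2.1 hadj.2.1 hcol.2.1)
    (mem t.2.2.1 hadj.2.2.1 hcol.2.2.1) (mem t.2.2.2 hadj.2.2.2 hcol.2.2.2)
    (by simpa only [ne_eq, hψ.eq_iff] using hgood.1)
  simp only [← map_add] at h4
  have z : ∀ x, ψ x = 0 ↔ x = 0 := fun x => map_eq_zero_iff ψ hψ
  simp only [z] at h4
  rcases hgood.2 with h | ⟨g1, g2, g3, g4⟩
  · rw [h, map_zero] at h4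
    exact hc h4.1.symm
  · rcases h4.2 with h | h | h | h
    exacts [g1 h, g2 h, g3 h, g4 h]

lemma lower {n : ℕ} (hn : 80 ≤ n) : ∃ M : Set (Fin n → ZMod 2), 0 ∉ M ∧
    ¬ HasRestriction (cycleMatroid octahedron) M ∧ M.ncard = 2 ^ (n - 1) + 4 := by
  let i0 : Fin n := ⟨0, by omega⟩
  let i1 : Fin n := ⟨1, by omega⟩
  let i2 : Fin n := ⟨2, by omega⟩
  let i3 : Fin n := ⟨3, by omega⟩
  have n01 : i1 ≠ i0 := by simp [i0, i1]
  have n02 : i2 ≠ i0 := by simp [i0, i2]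
  have n03 : i3 ≠ i0 := by simp [i0, i3]
  have n12 : i1 ≠ i2 := by simp [i1, i2]
  have n13 : i1 ≠ i3 := by simp [i1, i3]
  have n23 : i2 ≠ i3 := by simp [i2, i3]
  let r : Fin n → ZMod 2 := Pi.single i0 1
  let a : Fin n → ZMod 2 := Pi.single i1 1
  let b : Fin n → ZMod 2 := Pi.single i2 1
  let c : Fin n → ZMod 2 := Pi.single i3 1
  have hr : r ≠ 0 := by simp [r]
  have ra : r ⬝ᵥ a = 0 := by simp [r, a, n01.symm]
  have rb : r ⬝ᵥ b = 0 := by simp [r, b, n02.symm]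
  have rc : r ⬝ᵥ c = 0 := by simp [r, c, n03.symm]
  have a1 : a i1 = 1 := by simp [a]
  have a2 : a i2 = 0 := by simp [a, n12.symm]
  have a3 : a i3 = 0 := by simp [a, n13.symm]
  have b1 : b i1 = 0 := by simp [b, n12]
  have b2 : b i2 = 1 := by simp [b]
  have b3 : b i3 = 0 := by simp [b, n23.symm]
  have c1 : c i1 = 0 := by simp [c, n13]
  have c2 : c i2 = 0 := by simp [c, n23]
  have c3 : c i3 = 1 := by simp [c]
  have sep : ∀ (x y : Fin n → ZMod 2) (i : Fin n), x i ≠ y i → x ≠ y := fun x y i h h' => h (h' ▸ rfl)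
  have ha0 : a ≠ 0 := sep _ _ i1 (by simp [a1])
  have hb0 : b ≠ 0 := sep _ _ i2 (by simp [b2])
  have hc0 : c ≠ 0 := sep _ _ i3 (by simp [c3])
  have hab0 : a + b ≠ 0 := sep _ _ i1 (by simp [a1, b1])
  have hab : a ≠ b := sep _ _ i1 (by simp [a1, b1])
  have hac : a ≠ c := sep _ _ i1 (by simp [a1, c1])
  have hbc : b ≠ c := sep _ _ i2 (by simp [b2, c2])
  have haab : a ≠ a + b := sep _ _ i2 (by simp [a2, b2])
  have hbab : b ≠ a + b := sep _ _ i1 (by simp [a1, b1])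
  have hcab : c ≠ a + b := sep _ _ i3 (by simp [a3, b3, c3])
  let F : Finset (Fin n → ZMod 2) :=
    Finset.univ.filter (fun x : Fin n → ZMod 2 => ¬ r ⬝ᵥ x = 0) ∪ {a, b, c, a + b}
  refine ⟨F, ?_, ?_, ?_⟩
  · simp [F, ha0.symm, hb0.symm, hc0.symm, hab0.symm]
  · refine lower_free r a b c hc0 _ ?_
    intro x hx hrx
    simpa [F, hrx] using hx
  · rw [Set.ncard_coe_finset, Finset.card_union_of_disjoint]
    · have h1 := card_half r hr
      have h2 : ({a, b, c, a + b} : Finset (Fin n → ZMod 2)).card = 4 := by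
        rw [Finset.card_eq_succ]
        refine ⟨a, {b, c, a + b}, by simp [hab, hac, haab], rfl, ?_⟩
        rw [Finset.card_eq_three]
        exact ⟨b, c, a + b, hbc, hbab, hcab, rfl⟩
      have h3 : (2 : ℕ) ^ n = 2 * 2 ^ (n - 1) := by
        rw [← pow_succ']; congr 1; omega
      omega
    · rw [Finset.disjoint_right]
      intro x hx
      simp only [Finset.mem_insert, Finset.mem_singleton] at hx
      simp only [Finset.mem_filter, Finset.mem_univ, true_and, not_not]
      rcases hx with rfl | rfl | rfl | rfl
      · exact ra
      · exact rb
      · exact rc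
      · rw [dotProduct_add, ra, rb, add_zero]

end Octa

/-- Exact Turán number for the cycle matroid of the octahedron. -/
theorem octahedron_exact :
    ∃ n₀ : ℕ, ∀ n ≥ n₀,
      exNum (cycleMatroid octahedron) n = 2 ^ (n - 1) + 4 := by
  refine ⟨80, fun n hn => ?_⟩
  have hb : ∀ m ∈ {m | ∃ M : Set (Fin n → ZMod 2), 0 ∉ M ∧
      ¬ HasRestriction (cycleMatroid octahedron) M ∧ M.ncard = m}, m ≤ 2 ^ (n - 1) + 4 := by
    rintro m ⟨M, h0, hM, rfl⟩
    by_contra! hlt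
    apply hM
    have h3 : (2 : ℕ) ^ n = 2 * 2 ^ (n - 1) := by
      rw [← pow_succ']; congr 1; omega
    have := Octa.upper hn M.toFinset (by simpa using h0)
      (by rw [← Set.ncard_eq_toFinset_card']; omega)
    simpa using this
  exact le_antisymm (csSup_le ⟨_, Octa.lower hn⟩ hb) (le_csSup ⟨_, hb⟩ (Octa.lower hn))
end

section
/- (Counting matroidal Erdős–Stone theorem.) For every nonempty matroid N and every δ > 0, there exist a positive integer n₀ and a real α > 0 such that every matroid M ⊆ 𝔽₂ⁿ \ {0} with r(M) ≥ n₀ and |M| ≥ (1 − 2^{1−χ(N)} + δ)·2^{r(M)} has at least α·(2^{r(M)})^{r(N)} distinct N-restrictions. -/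
open scoped Classical

theorem es_zmod (a : ZMod 2) : a = 0 ∨ a = 1 := by
  fin_cases a
  · left; rfl
  · right; rfl

theorem es_fiber {G H : Type*} [AddCommGroup G] [AddCommGroup H] [Fintype G] [Fintype H]
    (f : G →+ H) (hf : Function.Surjective f) (T : Finset H) [DecidablePred (fun g => f g ∈ T)] :
    (Finset.univ.filter (fun g => f g ∈ T)).card * Fintype.card H = T.card * Fintype.card G := by
  have key : ∀ h : H, (Finset.univ.filter (fun g => f g = h)).card =
      (Finset.univ.filter (fun g => f g = 0)).card := by
    intro h
    obtain ⟨g0, rfl⟩ := hf h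
    refine Finset.card_bij (fun g _ => g - g0) ?_ ?_ ?_
    · intro a ha
      simp at ha ⊢
      rw [ha, sub_self]
    · intro a _ b _ hab
      exact sub_left_injective hab
    · intro b hb
      refine ⟨b + g0, ?_, ?_⟩
      · simp at hb ⊢
        exact hb
      · simp
  have cnt : ∀ T : Finset H, (Finset.univ.filter (fun g => f g ∈ T)).card =
      T.card * (Finset.univ.filter (fun g => f g = 0)).card := by
    intro T
    rw [Finset.card_eq_sum_card_fiberwise (f := f) (t := T) (by intro x hx; simpa using hx)]
    rw [Finset.sum_const_nat (m := (Finset.univ.filter (fun g => f g = 0)).card)]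
    intro h hh
    rw [← key h]
    congr 1
    ext g
    simp
    rintro rfl; exact hh
  have h1 := cnt Finset.univ
  have h2 := cnt T
  simp at h1
  have h3 : (Finset.univ.filter (fun g => f g ∈ T)).card = T.card *
      (Finset.univ.filter (fun g => f g = 0)).card := by
    rw [← h2]; congr 1; ext g; simp
  rw [h3, h1]
  ring

/-- finding a popular difference -/
theorem es_pop {V : Type*} [AddCommGroup V] [Fintype V] {Y : Type*} [Fintype Y]
    (t : Y → V) (M : Finset V) (δ : ℝ) (hδ : 0 < δ)
    (hM : δ * Fintype.card V ≤ M.card) (hY : 2 / δ ^ 2 < Fintype.card Y) :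
    ∃ y y' : Y, y ≠ y' ∧ δ ^ 2 / 2 * Fintype.card V ≤
      ((M.filter (fun v => v - t y + t y' ∈ M)).card : ℝ) := by
  by_contra! hcon
  have hV : (0:ℝ) < Fintype.card V := by exact_mod_cast Fintype.card_pos
  set T : ℝ := (Fintype.card Y : ℝ) with hT
  have hTpos : 0 < T := lt_of_le_of_lt (by positivity) hY
  let ind : V → Y → ℝ := fun v y => if v + t y ∈ M then 1 else 0
  have hs1 : ∀ y, ∑ v, ind v y = M.card := by
    intro y
    have : ∑ v, ind v y = ∑ v, if v ∈ M then (1:ℝ) else 0 :=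
      Equiv.sum_comp (Equiv.addRight (t y)) (fun v => if v ∈ M then (1:ℝ) else 0)
    rw [this]; simp
  have hs2 : ∀ y y', ∑ v, ind v y * ind v y' =
      ((M.filter (fun v => v - t y + t y' ∈ M)).card : ℝ) := by
    intro y y'
    have : ∑ v, ind v y * ind v y' =
        ∑ v, if v ∈ M ∧ v - t y + t y' ∈ M then (1:ℝ) else 0 := by
      rw [← Equiv.sum_comp (Equiv.addRight (t y))
        (fun v => if v ∈ M ∧ v - t y + t y' ∈ M then (1:ℝ) else 0)]
      refine Finset.sum_congr rfl fun v _ => ?_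
      simp only [ind, Equiv.coe_addRight, add_sub_cancel_right]
      by_cases h1 : v + t y ∈ M <;> by_cases h2 : v + t y' ∈ M <;> simp [h1, h2]
    rw [this, Finset.sum_boole]
    congr 2
    ext v; simp
  have hcs : (∑ v, ∑ y, ind v y) ^ 2 ≤ Fintype.card V * ∑ v, (∑ y, ind v y) ^ 2 := by
    have := sq_sum_le_card_mul_sum_sq (s := (Finset.univ : Finset V)) (f := fun v => ∑ y, ind v y)
    simpa using this
  have hL : ∑ v, ∑ y, ind v y = T * M.card := by
    rw [Finset.sum_comm]; simp [hs1, hT]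
  have hR : ∑ v, (∑ y, ind v y) ^ 2 ≤ T * Fintype.card V + T * T * (δ ^ 2 / 2 * Fintype.card V) := by
    have e : ∑ v, (∑ y, ind v y) ^ 2 = ∑ y, ∑ y', ∑ v, ind v y * ind v y' := by
      simp_rw [sq, Finset.sum_mul_sum]
      rw [Finset.sum_comm]
      refine Finset.sum_congr rfl fun y _ => ?_
      rw [Finset.sum_comm]
    rw [e]
    have b : ∀ y y', ∑ v, ind v y * ind v y' ≤
        (if y = y' then (Fintype.card V : ℝ) else 0) + δ ^ 2 / 2 * Fintype.card V := by
      intro y y'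
      rw [hs2]
      split_ifs with h
      · have : ((M.filter (fun v => v - t y + t y' ∈ M)).card : ℝ) ≤ Fintype.card V := by
          exact_mod_cast Finset.card_le_univ _
        have : 0 ≤ δ ^ 2 / 2 * (Fintype.card V : ℝ) := by positivity
        linarith
      · have := (hcon y y' h).le
        linarith
    calc _ ≤ ∑ y : Y, ∑ y' : Y, ((if y = y' then (Fintype.card V : ℝ) else 0) +
          δ ^ 2 / 2 * Fintype.card V) :=
        Finset.sum_le_sum fun y _ => Finset.sum_le_sum fun y' _ => b y y'
      _ = _ := by
        simp [Finset.sum_add_distrib, hT]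
        ring
  rw [hL] at hcs
  have h1 : (T * (δ * Fintype.card V)) ^ 2 ≤ (T * M.card) ^ 2 := by gcongr
  have h2 := h1.trans (hcs.trans (mul_le_mul_of_nonneg_left hR hV.le))
  have h3 : T * Fintype.card V ^ 2 * (T * δ ^ 2) ≤ T * Fintype.card V ^ 2 * (1 + T * δ ^ 2 / 2) := by
    nlinarith
  have h4 := le_of_mul_le_mul_left h3 (by positivity)
  rw [div_lt_iff₀ (by positivity)] at hY
  linarith

theorem es_affine (m : ℕ) : ∀ δ : ℝ, 0 < δ → ∃ D : ℕ, ∀ (V : Type) [AddCommGroup V]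
    [Module (ZMod 2) V] [Fintype V] (ι : (Fin D → ZMod 2) →ₗ[ZMod 2] V) (M : Finset V),
    δ * Fintype.card V ≤ M.card →
    ∃ (x : V) (j : (Fin m → ZMod 2) →ₗ[ZMod 2] (Fin D → ZMod 2)), Function.Injective j ∧
      ∀ y, x + ι (j y) ∈ M := by
  induction m with
  | zero =>
    intro δ hδ
    refine ⟨0, fun V _ _ _ ι M hM => ?_⟩
    have hV : (0:ℝ) < Fintype.card V := by exact_mod_cast Fintype.card_pos
    have : 0 < M.card := by
      have : (0:ℝ) < M.card := lt_of_lt_of_le (by positivity) hM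
      exact_mod_cast this
    obtain ⟨x, hx⟩ := Finset.card_pos.mp this
    exact ⟨x, 0, fun a b _ => Subsingleton.elim _ _, fun y => by
      rw [LinearMap.zero_apply, map_zero, add_zero]; exact hx⟩
  | succ m ih =>
    intro δ hδ
    obtain ⟨D1, hD1⟩ := ih (δ ^ 2 / 2) (by positivity)
    obtain ⟨D0, hD0⟩ := pow_unbounded_of_one_lt (2 / δ ^ 2) (one_lt_two (α := ℝ))
    refine ⟨D0 + D1, fun V _ _ _ ι M hM => ?_⟩
    let e : ((Fin D0 → ZMod 2) × (Fin D1 → ZMod 2)) ≃ₗ[ZMod 2] (Fin (D0 + D1) → ZMod 2) :=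
      LinearEquiv.ofFinrankEq _ _ (by simp)
    let ι' := ι ∘ₗ e.toLinearMap
    obtain ⟨y, y', hne, hc⟩ := es_pop (fun y : Fin D0 → ZMod 2 => ι' (y, 0)) M δ hδ hM
      (by simpa using hD0)
    obtain ⟨x, j, hj, hx⟩ := hD1 V (ι' ∘ₗ LinearMap.inr _ _ _) _ hc
    set b := y' - y with hb
    have hb0 : b ≠ 0 := sub_ne_zero.mpr hne.symm
    let tl : (Fin (m+1) → ZMod 2) →ₗ[ZMod 2] (Fin m → ZMod 2) := LinearMap.funLeft _ _ Fin.succ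
    let j' : (Fin (m+1) → ZMod 2) →ₗ[ZMod 2] ((Fin D0 → ZMod 2) × (Fin D1 → ZMod 2)) :=
      LinearMap.prod ((LinearMap.proj 0).smulRight b) (j ∘ₗ tl)
    refine ⟨x, e.toLinearMap ∘ₗ j', ?_, ?_⟩
    · refine e.injective.comp ?_
      intro a a' h
      have h1 : a 0 • b = a' 0 • b := congrArg Prod.fst h
      have h2 : j (tl a) = j (tl a') := congrArg Prod.snd h
      have h3 := hj h2
      have h4 : a 0 = a' 0 := smul_left_injective _ hb0 h1
      funext i
      refine Fin.cases h4 (fun i => ?_) i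
      exact congrFun h3 i
    · intro a
      have hxa := hx (tl a)
      rw [Finset.mem_filter] at hxa
      have hsplit : ι (e (j' a)) = ι' (0, j (tl a)) + a 0 • ι' (b, 0) := by
        rw [← map_smul, ← map_add]
        show ι (e (a 0 • b, j (tl a))) = ι (e _)
        simp
      have hbb : ι' (b, 0) = ι' (y', 0) - ι' (y, 0) := by
        rw [← map_sub]; simp [hb]
      show x + ι (e (j' a)) ∈ M
      rw [hsplit]
      rcases es_zmod (a 0) with h | h
      · rw [h, zero_smul, add_zero]; exact hxa.1
      · rw [h, one_smul, hbb]
        convert hxa.2 using 1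
        simp; abel

theorem es_exist (c : ℕ) : ∀ (m : ℕ) (δ : ℝ), 0 < δ → ∃ D : ℕ, ∀ (V : Type) [AddCommGroup V]
    [Module (ZMod 2) V] [Fintype V] (ι : (Fin D → ZMod 2) →ₗ[ZMod 2] V) (M : Finset V),
    (1 - 2 ^ (1 - (c : ℤ)) + δ) * Fintype.card V ≤ (M.card : ℝ) →
    ∃ (A : (Fin c → ZMod 2) →ₗ[ZMod 2] V) (j : (Fin m → ZMod 2) →ₗ[ZMod 2] (Fin D → ZMod 2)),
      Function.Injective j ∧ ∀ a, a ≠ 0 → ∀ y, A a + ι (j y) ∈ M := by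
  induction c with
  | zero =>
    intro m δ hδ
    refine ⟨m, fun V _ _ _ ι M hM => ⟨0, LinearMap.id, fun a b h => h, ?_⟩⟩
    intro a ha
    exact absurd (Subsingleton.elim a 0) ha
  | succ c ih =>
    intro m δ hδ
    obtain ⟨D1, hD1⟩ := ih m (2 * δ) (by positivity)
    obtain ⟨D, hD⟩ := es_affine D1 δ hδ
    refine ⟨D, fun V _ _ _ ι M hM => ?_⟩
    have hV : (0:ℝ) < Fintype.card V := by exact_mod_cast Fintype.card_pos
    have hp : (2:ℝ) ^ (1 - ((c+1 : ℕ) : ℤ)) = ((2:ℝ) ^ c)⁻¹ := by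
      push_cast
      rw [show (1 - ((c:ℤ)+1)) = -(c:ℤ) by ring, zpow_neg, zpow_natCast]
    have hp' : (2:ℝ) ^ (1 - (c : ℤ)) = 2 * ((2:ℝ) ^ c)⁻¹ := by
      rw [sub_eq_add_neg, zpow_add₀ two_ne_zero, zpow_neg, zpow_natCast, zpow_one]
    rw [hp] at hM
    have hle : ((2:ℝ) ^ c)⁻¹ ≤ 1 := inv_le_one_of_one_le₀ (one_le_pow₀ one_le_two)
    obtain ⟨x, j, hj, hx⟩ := hD V ι M (le_trans (by nlinarith) hM)
    let M' := M ∩ Finset.univ.filter (fun v => x + v ∈ M)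
    have hc2 : (Finset.univ.filter (fun v => x + v ∈ M)).card = M.card := by
      refine Finset.card_bij (fun v _ => x + v) ?_ ?_ ?_
      · intro a ha; simpa using ha
      · intro a _ b _ h; exact add_left_cancel h
      · intro b hb; exact ⟨b - x, by simpa using hb, by simp⟩
    have hc3 : (2 * M.card : ℝ) - Fintype.card V ≤ M'.card := by
      have h1 := Finset.card_union_add_card_inter M (Finset.univ.filter (fun v => x + v ∈ M))
      have h2 := Finset.card_le_univ (M ∪ Finset.univ.filter (fun v => x + v ∈ M))
      rw [hc2] at h1
      have : 2 * M.card ≤ Fintype.card V + M'.card := by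
        change 2 * M.card ≤ Fintype.card V + (M ∩ Finset.univ.filter (fun v => x + v ∈ M)).card
        omega
      have : (2 * M.card : ℝ) ≤ Fintype.card V + M'.card := by exact_mod_cast this
      linarith
    obtain ⟨A, j1, hj1, hA⟩ := hD1 V (ι ∘ₗ j) M' (by
      rw [hp']; refine le_trans ?_ hc3; nlinarith)
    let tl : (Fin (c+1) → ZMod 2) →ₗ[ZMod 2] (Fin c → ZMod 2) := LinearMap.funLeft _ _ Fin.succ
    refine ⟨(LinearMap.proj 0).smulRight x + A ∘ₗ tl, j ∘ₗ j1, hj.comp hj1, ?_⟩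
    intro a ha y
    show (a 0 • x + A (tl a)) + ι (j (j1 y)) ∈ M
    by_cases ht : tl a = 0
    · have h0 : a 0 ≠ 0 := by
        intro h0
        apply ha
        funext i
        refine Fin.cases h0 (fun i => ?_) i
        exact congrFun ht i
      rcases es_zmod (a 0) with h | h
      · exact absurd h h0
      · rw [ht, h]; simpa using hx (j1 y)
    · have := hA (tl a) ht y
      simp only [M', Finset.mem_inter, Finset.mem_filter, Finset.mem_univ, true_and] at this
      rcases es_zmod (a 0) with h | h
      · rw [h]; simpa using this.1
      · rw [h, one_smul, add_assoc]; exact this.2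

instance es_finite {U V : Type*} [AddCommGroup U] [Module (ZMod 2) U] [AddCommGroup V]
    [Module (ZMod 2) V] [Finite U] [Finite V] : Finite (U →ₗ[ZMod 2] V) :=
  Finite.of_injective (fun f => (f : U → V)) DFunLike.coe_injective

theorem es_card_hom {U V : Type*} [AddCommGroup U] [Module (ZMod 2) U] [AddCommGroup V]
    [Module (ZMod 2) V] [Fintype U] [Fintype V] [Fintype (U →ₗ[ZMod 2] V)] :
    Fintype.card (U →ₗ[ZMod 2] V) = Fintype.card V ^ Module.finrank (ZMod 2) U := by
  rw [Fintype.card_congr ((Module.finBasis (ZMod 2) U).constr (ZMod 2) (M' := V)).toEquiv.symm]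
  simp

theorem es_restrict_surj {U W V : Type*} [AddCommGroup U] [Module (ZMod 2) U] [AddCommGroup W]
    [Module (ZMod 2) W] [AddCommGroup V] [Module (ZMod 2) V] (j : W →ₗ[ZMod 2] U)
    (hj : Function.Injective j) (g : W →ₗ[ZMod 2] V) : ∃ f : U →ₗ[ZMod 2] V, f ∘ₗ j = g := by
  obtain ⟨p, hp⟩ := j.exists_leftInverse_of_injective (LinearMap.ker_eq_bot.mpr hj)
  exact ⟨g ∘ₗ p, by rw [LinearMap.comp_assoc, hp, LinearMap.comp_id]⟩

def es_pre {U W : Type*} (V : Type*) [AddCommGroup U] [Module (ZMod 2) U] [AddCommGroup W]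
    [Module (ZMod 2) W] [AddCommGroup V] [Module (ZMod 2) V] (j : W →ₗ[ZMod 2] U) :
    (U →ₗ[ZMod 2] V) →+ (W →ₗ[ZMod 2] V) where
  toFun f := f ∘ₗ j
  map_zero' := rfl
  map_add' _ _ := rfl

def es_ev {U : Type*} (V : Type*) [AddCommGroup U] [Module (ZMod 2) U]
    [AddCommGroup V] [Module (ZMod 2) V] (x : U) :
    (U →ₗ[ZMod 2] V) →+ V where
  toFun f := f x
  map_zero' := rfl
  map_add' _ _ := rfl

theorem es_ev_surj {U V : Type*} [AddCommGroup U] [Module (ZMod 2) U]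
    [AddCommGroup V] [Module (ZMod 2) V] (x : U) (hx : x ≠ 0) :
    Function.Surjective (es_ev V x) := by
  intro v
  obtain ⟨f, hf⟩ := es_restrict_surj (LinearMap.toSpanSingleton (ZMod 2) U x)
    (smul_left_injective _ hx) (LinearMap.toSpanSingleton (ZMod 2) V v)
  refine ⟨f, ?_⟩
  have := congrArg (fun g => g 1) hf
  simpa [es_ev] using this

theorem es_up {U Z V : Type} [AddCommGroup U] [Module (ZMod 2) U] [AddCommGroup Z]
    [Module (ZMod 2) Z] [AddCommGroup V] [Module (ZMod 2) V] [Fintype (U →ₗ[ZMod 2] V)]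
    [Fintype (U →ₗ[ZMod 2] Z)] [Fintype (Z →ₗ[ZMod 2] V)]
    (X : Finset (U →ₗ[ZMod 2] V)) (good : Finset (Z →ₗ[ZMod 2] V))
    (hgood : ∀ L ∈ good, ∃ ψ : U →ₗ[ZMod 2] Z, Function.Injective ψ ∧ L ∘ₗ ψ ∈ X) :
    (good.card : ℝ) * Fintype.card (U →ₗ[ZMod 2] V) ≤
      Fintype.card (U →ₗ[ZMod 2] Z) * (X.card * Fintype.card (Z →ₗ[ZMod 2] V)) := by
  have h1 : good ⊆ ((Finset.univ.filter
      (fun ψ : U →ₗ[ZMod 2] Z => Function.Injective ψ)).biUnion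
      (fun ψ => Finset.univ.filter (fun L => es_pre V ψ L ∈ X))) := by
    intro L hL
    obtain ⟨ψ, h1, h2⟩ := hgood L hL
    simp only [Finset.mem_biUnion, Finset.mem_filter, Finset.mem_univ, true_and]
    exact ⟨ψ, h1, h2⟩
  have h2 := (Finset.card_le_card h1).trans Finset.card_biUnion_le
  have h3 : good.card * Fintype.card (U →ₗ[ZMod 2] V) ≤
      Fintype.card (U →ₗ[ZMod 2] Z) *
        (X.card * Fintype.card (Z →ₗ[ZMod 2] V)) := by
    refine (Nat.mul_le_mul_right _ h2).trans ?_
    rw [Finset.sum_mul]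
    refine (Finset.sum_le_card_nsmul _ _ (X.card * Fintype.card (Z →ₗ[ZMod 2] V)) ?_).trans ?_
    · intro ψ hψ
      refine (es_fiber (es_pre V ψ) ?_ X).le
      intro g
      exact es_restrict_surj ψ (Finset.mem_filter.mp hψ).2 g
    · rw [smul_eq_mul]
      exact Nat.mul_le_mul_right _ (Finset.card_le_univ _)
  exact_mod_cast h3

theorem es_low {Z V : Type} [AddCommGroup Z]
    [Module (ZMod 2) Z] [AddCommGroup V] [Module (ZMod 2) V] [Fintype Z] [Fintype V]
    [Fintype (Z →ₗ[ZMod 2] V)] (M : Finset V) (θ δ : ℝ) (hδ : 0 < δ) (hθ0 : 0 ≤ θ)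
    (hM : (θ + δ) * Fintype.card V ≤ (M.card : ℝ)) (hZ2 : 2 ≤ (Fintype.card Z : ℝ) * δ)
    (pull : (Z →ₗ[ZMod 2] V) → Finset Z)
    (hpull : pull = fun L => Finset.univ.filter (fun z => L z ∈ M))
    (good : Finset (Z →ₗ[ZMod 2] V))
    (hgd : good =
      Finset.univ.filter (fun L => (θ + δ / 4) * Fintype.card Z ≤ ((pull L).card : ℝ))) :
    δ / 4 * (Fintype.card (Z →ₗ[ZMod 2] V) : ℝ) ≤ good.card := by
  have hV : (0:ℝ) < Fintype.card V := by exact_mod_cast Fintype.card_pos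
  have hZp : (0:ℝ) < Fintype.card Z := by exact_mod_cast Fintype.card_pos
  set G : ℝ := (Fintype.card (Z →ₗ[ZMod 2] V) : ℝ) with hG
  have hGp : 0 < G := by rw [hG]; exact_mod_cast Fintype.card_pos
  have hsum1 : ((Fintype.card Z : ℝ) - 1) * (M.card * G) ≤
      (∑ L : Z →ₗ[ZMod 2] V, ((pull L).card : ℝ)) * Fintype.card V := by
    have e : ∑ L : Z →ₗ[ZMod 2] V, ((pull L).card : ℝ) =
        ∑ z : Z, ((Finset.univ.filter (fun L => es_ev V z L ∈ M)).card : ℝ) := by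
      simp only [hpull, Finset.card_filter, Nat.cast_sum]
      rw [Finset.sum_comm]
      rfl
    rw [e, Finset.sum_mul]
    calc ((Fintype.card Z : ℝ) - 1) * (M.card * G)
        = ∑ z ∈ Finset.univ.erase (0 : Z), (M.card * G) := by
          rw [Finset.sum_const, Finset.card_erase_of_mem (Finset.mem_univ _), nsmul_eq_mul,
            Finset.card_univ, Nat.cast_sub Fintype.card_pos, Nat.cast_one]
      _ ≤ ∑ z ∈ Finset.univ.erase (0 : Z),
          ((Finset.univ.filter (fun L => es_ev V z L ∈ M)).card : ℝ) * Fintype.card V := by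
          refine Finset.sum_le_sum fun z hz => ?_
          have := es_fiber (es_ev V z) (es_ev_surj z (Finset.ne_of_mem_erase hz)) M
          rw [hG]
          exact_mod_cast this.ge
      _ ≤ _ := Finset.sum_le_sum_of_subset_of_nonneg (Finset.erase_subset _ _)
          (fun _ _ _ => by positivity)
  have hsum2 : (∑ L : Z →ₗ[ZMod 2] V, ((pull L).card : ℝ)) ≤
      good.card * Fintype.card Z + G * ((θ + δ / 4) * Fintype.card Z) := by
    calc (∑ L : Z →ₗ[ZMod 2] V, ((pull L).card : ℝ))
        ≤ ∑ L : Z →ₗ[ZMod 2] V, ((if L ∈ good then (Fintype.card Z : ℝ) else 0) +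
            (θ + δ / 4) * Fintype.card Z) := by
          refine Finset.sum_le_sum fun L _ => ?_
          split_ifs with h
          · have : ((pull L).card : ℝ) ≤ Fintype.card Z := by
              exact_mod_cast Finset.card_le_univ _
            have : 0 ≤ (θ + δ / 4) * (Fintype.card Z : ℝ) := by positivity
            linarith
          · have : ¬ ((θ + δ / 4) * Fintype.card Z ≤ ((pull L).card : ℝ)) := by
              intro h'; exact h (hgd ▸ Finset.mem_filter.mpr ⟨Finset.mem_univ _, h'⟩)
            linarith
      _ = _ := by
          rw [Finset.sum_add_distrib, Finset.sum_const, Finset.card_univ, nsmul_eq_mul,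
            Finset.sum_ite_mem, Finset.univ_inter, Finset.sum_const, nsmul_eq_mul]
  have hle1 : θ + δ ≤ 1 := by
    have h1 : (M.card : ℝ) ≤ Fintype.card V := by exact_mod_cast Finset.card_le_univ _
    have h2 : (θ + δ) * Fintype.card V ≤ 1 * Fintype.card V := by linarith
    exact le_of_mul_le_mul_right h2 hV
  have hlow : δ / 4 * G ≤ good.card := by
    set C : ℝ := (Fintype.card Z : ℝ)
    set v : ℝ := (Fintype.card V : ℝ)
    have hC1 : 1 ≤ C := by
      have : 1 ≤ Fintype.card Z := Fintype.card_pos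
      show (1:ℝ) ≤ (Fintype.card Z : ℝ)
      exact_mod_cast this
    have k1 : (C - 1) * ((θ + δ) * v * G) ≤ (C - 1) * (M.card * G) := by
      have : 0 ≤ C - 1 := by linarith
      gcongr
    have k2 := k1.trans (hsum1.trans (mul_le_mul_of_nonneg_right hsum2 hV.le))
    have k3 : ((C - 1) * (θ + δ) * G) * v ≤ (good.card * C + G * ((θ + δ / 4) * C)) * v := by
      linarith
    have k4 := le_of_mul_le_mul_right k3 hV
    have k5 : (δ / 4 * C) * G ≤ ((C - 1) * (θ + δ) - (θ + δ / 4) * C) * G := by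
      refine mul_le_mul_of_nonneg_right ?_ hGp.le
      nlinarith
    have k6 : (δ / 4 * G) * C ≤ good.card * C := by linarith
    exact le_of_mul_le_mul_right k6 hZp
  exact hlow

/-- many linear maps sending `N` into `M`. -/
theorem es_count {m c : ℕ} (hc : 1 ≤ c) (N : Set (Fin m → ZMod 2))
    (φ : (Fin m → ZMod 2) →ₗ[ZMod 2] (Fin c → ZMod 2)) (hφ : ∀ x ∈ N, φ x ≠ 0)
    {δ : ℝ} (hδ : 0 < δ) : ∃ β : ℝ, 0 < β ∧ ∀ (V : Type) [AddCommGroup V]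
    [Module (ZMod 2) V] [Fintype V] [Fintype ((Fin m → ZMod 2) →ₗ[ZMod 2] V)] (M : Finset V),
    0 ∉ M → (1 - 2 ^ (1 - (c : ℤ)) + δ) * Fintype.card V ≤ (M.card : ℝ) →
    β * (Fintype.card V : ℝ) ^ m ≤
      ((Finset.univ.filter (fun f : (Fin m → ZMod 2) →ₗ[ZMod 2] V => ∀ x ∈ N, f x ∈ M)).card : ℝ) := by
  obtain ⟨D, hD⟩ := es_exist c m (δ / 4) (by positivity)
  obtain ⟨s, hs⟩ := pow_unbounded_of_one_lt (2 / δ) (one_lt_two (α := ℝ))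
  let Z := (Fin D → ZMod 2) × (Fin s → ZMod 2)
  have hZ : (Fintype.card Z : ℝ) = 2 ^ D * 2 ^ s := by simp [Z]
  have hZ2 : 2 ≤ (Fintype.card Z : ℝ) * δ := by
    rw [hZ]
    rw [div_lt_iff₀ hδ] at hs
    have : (1:ℝ) ≤ 2 ^ D := one_le_pow₀ one_le_two
    nlinarith
  have : Fintype ((Fin m → ZMod 2) →ₗ[ZMod 2] Z) := Fintype.ofFinite _
  set P : ℝ := (Fintype.card ((Fin m → ZMod 2) →ₗ[ZMod 2] Z) : ℝ) with hP
  have hPpos : 0 < P := by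
    rw [hP]; exact_mod_cast Fintype.card_pos
  refine ⟨δ / 4 / P, by positivity, fun V _ _ _ _ M h0 hM => ?_⟩
  set θ : ℝ := 1 - 2 ^ (1 - (c : ℤ)) with hθ
  have hθ0 : 0 ≤ θ := by
    have : (2:ℝ) ^ (1 - (c : ℤ)) ≤ 1 := zpow_le_one_of_nonpos₀ one_le_two (by omega)
    linarith
  have hV : (0:ℝ) < Fintype.card V := by exact_mod_cast Fintype.card_pos
  have hZp : (0:ℝ) < Fintype.card Z := by exact_mod_cast Fintype.card_pos
  have : Fintype (Z →ₗ[ZMod 2] V) := Fintype.ofFinite _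
  set G : ℝ := (Fintype.card (Z →ₗ[ZMod 2] V) : ℝ) with hG
  have hGp : 0 < G := by rw [hG]; exact_mod_cast Fintype.card_pos
  set X := Finset.univ.filter (fun f : (Fin m → ZMod 2) →ₗ[ZMod 2] V => ∀ x ∈ N, f x ∈ M) with hX
  let pull : (Z →ₗ[ZMod 2] V) → Finset Z := fun L => Finset.univ.filter (fun z => L z ∈ M)
  let good : Finset (Z →ₗ[ZMod 2] V) :=
    Finset.univ.filter (fun L => (θ + δ / 4) * Fintype.card Z ≤ ((pull L).card : ℝ))
  -- every good L gives an injective ψ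
  have hgood : ∀ L ∈ good, ∃ ψ : (Fin m → ZMod 2) →ₗ[ZMod 2] Z, Function.Injective ψ ∧
      L ∘ₗ ψ ∈ X := by
    intro L hL
    have hL' : (θ + δ / 4) * Fintype.card Z ≤ ((pull L).card : ℝ) := (Finset.mem_filter.mp hL).2
    obtain ⟨A, j, hj, hA⟩ := hD Z (LinearMap.inl _ _ _) (pull L) hL'
    refine ⟨A ∘ₗ φ + LinearMap.inl _ _ _ ∘ₗ j, ?_, ?_⟩
    · rw [injective_iff_map_eq_zero]
      intro x hx
      by_cases hφx : φ x = 0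
      · have : (LinearMap.inl (ZMod 2) (Fin D → ZMod 2) (Fin s → ZMod 2)) (j x) = 0 := by
          rw [LinearMap.add_apply, LinearMap.comp_apply, hφx, map_zero, zero_add] at hx
          exact hx
        have h2 := LinearMap.inl_injective (this.trans (map_zero _).symm)
        exact hj (h2.trans (map_zero _).symm)
      · exfalso
        have h1 := hA (φ x) hφx x
        have h2 : A (φ x) + (LinearMap.inl (ZMod 2) (Fin D → ZMod 2) (Fin s → ZMod 2)) (j x) = 0 := hx
        rw [h2] at h1
        have h3 := (Finset.mem_filter.mp h1).2
        rw [map_zero] at h3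
        exact h0 h3
    · rw [hX, Finset.mem_filter]
      refine ⟨Finset.mem_univ _, fun x hx => ?_⟩
      exact (Finset.mem_filter.mp (hA (φ x) (hφ x hx) x)).2
  -- upper bound on good
  have hup : (good.card : ℝ) * Fintype.card ((Fin m → ZMod 2) →ₗ[ZMod 2] V) ≤ P * (X.card * G) := by
    exact es_up X good hgood
  have hlow : δ / 4 * G ≤ good.card := es_low M θ δ hδ hθ0 hM hZ2 pull rfl good rfl
  have hH : (Fintype.card ((Fin m → ZMod 2) →ₗ[ZMod 2] V) : ℝ) = (Fintype.card V : ℝ) ^ m := by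
    rw [es_card_hom]; simp
  rw [hH] at hup
  have hvm : 0 ≤ (Fintype.card V : ℝ) ^ m := by positivity
  have f1 := (mul_le_mul_of_nonneg_right hlow hvm).trans hup
  have f2 : (δ / 4 * (Fintype.card V : ℝ) ^ m) * G ≤ (P * X.card) * G := by linarith
  have f3 := le_of_mul_le_mul_right f2 hGp
  rw [div_mul_eq_mul_div, div_le_iff₀ hPpos]
  linarith

theorem es_inj {m : ℕ} (N : Set (Fin m → ZMod 2)) (V : Type) [AddCommGroup V]
    [Module (ZMod 2) V] [Fintype V] (W : Submodule (ZMod 2) (Fin m → ZMod 2)) (M : Set V)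
    (X : Finset ((Fin m → ZMod 2) →ₗ[ZMod 2] V)) (hXM : ∀ f ∈ X, ∀ x ∈ N, f x ∈ M)
    (β : ℝ) (hX : β * (Fintype.card V : ℝ) ^ m ≤ X.card)
    (hvbig : 2 * 2 ^ m ≤ (Fintype.card V : ℝ) * β) :
    ∃ Q : Finset (W →ₗ[ZMod 2] V),
      β / 2 * (Fintype.card V : ℝ) ^ (Module.finrank (ZMod 2) W) ≤ Q.card ∧
      ∀ g ∈ Q, ∃ f : (Fin m → ZMod 2) →ₗ[ZMod 2] V, Function.Injective f ∧
        (∀ x ∈ N, f x ∈ M) ∧ f ∘ₗ W.subtype = g := by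
  have : Fintype ((Fin m → ZMod 2) →ₗ[ZMod 2] V) := Fintype.ofFinite _
  have : Fintype W := Fintype.ofFinite _
  have : Fintype (W →ₗ[ZMod 2] V) := Fintype.ofFinite _
  set v : ℝ := (Fintype.card V : ℝ) with hv
  have hvpos : 0 < v := by rw [hv]; exact_mod_cast Fintype.card_pos
  have hHom : (Fintype.card ((Fin m → ZMod 2) →ₗ[ZMod 2] V) : ℝ) = v ^ m := by
    rw [es_card_hom]; simp [hv]
  have hHomW : (Fintype.card (W →ₗ[ZMod 2] V) : ℝ) = v ^ Module.finrank (ZMod 2) W := by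
    rw [es_card_hom]; simp [hv]
  -- injective maps
  let Y := X.filter (fun f : (Fin m → ZMod 2) →ₗ[ZMod 2] V => Function.Injective f)
  let B := X.filter (fun f : (Fin m → ZMod 2) →ₗ[ZMod 2] V => ¬ Function.Injective f)
  have hYB : (Y.card : ℝ) + B.card = X.card := by
    exact_mod_cast Finset.card_filter_add_card_filter_not (s := X)
      (fun f : (Fin m → ZMod 2) →ₗ[ZMod 2] V => Function.Injective f)
  have hB : (B.card : ℝ) * v ≤ 2 ^ m * v ^ m := by
    have h1 : B ⊆ (Finset.univ.erase (0 : Fin m → ZMod 2)).biUnion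
        (fun x => Finset.univ.filter (fun f => es_ev V x f ∈ ({0} : Finset V))) := by
      intro f hf
      have h2 := (Finset.mem_filter.mp hf).2
      rw [injective_iff_map_eq_zero] at h2
      push Not at h2
      obtain ⟨x, hx, hx0⟩ := h2
      simp only [Finset.mem_biUnion, Finset.mem_erase, Finset.mem_filter, Finset.mem_univ,
        true_and, Finset.mem_singleton, and_true]
      exact ⟨x, hx0, hx⟩
    have h2 := (Finset.card_le_card h1).trans Finset.card_biUnion_le
    have h3 : B.card * Fintype.card V ≤ 2 ^ m * Fintype.card ((Fin m → ZMod 2) →ₗ[ZMod 2] V) := by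
      refine (Nat.mul_le_mul_right _ h2).trans ?_
      rw [Finset.sum_mul]
      refine (Finset.sum_le_card_nsmul _ _
        (Fintype.card ((Fin m → ZMod 2) →ₗ[ZMod 2] V)) ?_).trans ?_
      · intro x hx
        have := es_fiber (es_ev V x) (es_ev_surj x (Finset.ne_of_mem_erase hx)) {0}
        rw [this]; simp
      · rw [smul_eq_mul]
        refine Nat.mul_le_mul_right _ ((Finset.card_le_univ _).trans ?_)
        simp
    rw [← hHom, hv]
    exact_mod_cast h3
  have hY : β / 2 * v ^ m ≤ Y.card := by
    have h1 : (B.card : ℝ) * v ≤ (β / 2 * v ^ m) * v := by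
      have : 0 < v ^ m := by positivity
      nlinarith
    have := le_of_mul_le_mul_right h1 hvpos
    linarith
  -- restrict to W
  let Q : Finset (W →ₗ[ZMod 2] V) := Y.image (es_pre V W.subtype)
  have hQ : β / 2 * v ^ Module.finrank (ZMod 2) W ≤ Q.card := by
    have h1 : Y.card ≤ (Finset.univ.filter (fun f => es_pre V W.subtype f ∈ Q)).card := by
      refine Finset.card_le_card fun f hf => ?_
      exact Finset.mem_filter.mpr ⟨Finset.mem_univ _, Finset.mem_image_of_mem _ hf⟩
    have h2 := es_fiber (es_pre V W.subtype)
      (fun g => es_restrict_surj W.subtype W.injective_subtype g) Q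
    have h3 : Y.card * Fintype.card (W →ₗ[ZMod 2] V) ≤
        Q.card * Fintype.card ((Fin m → ZMod 2) →ₗ[ZMod 2] V) :=
      (Nat.mul_le_mul_right _ h1).trans h2.le
    have h4 : (Y.card : ℝ) * v ^ Module.finrank (ZMod 2) W ≤ Q.card * v ^ m := by
      rw [← hHom, ← hHomW]; exact_mod_cast h3
    have h5 : 0 < v ^ Module.finrank (ZMod 2) W := by positivity
    have h6 : (β / 2 * v ^ Module.finrank (ZMod 2) W) * v ^ m ≤ Q.card * v ^ m := by nlinarith
    exact le_of_mul_le_mul_right h6 (by positivity)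
  refine ⟨Q, hQ, fun g hg => ?_⟩
  obtain ⟨f, hf, rfl⟩ := Finset.mem_image.mp hg
  obtain ⟨hfX, hfi⟩ := Finset.mem_filter.mp hf
  exact ⟨f, hfi, hXM f hfX, rfl⟩

theorem es_both {m c : ℕ} (hc : 1 ≤ c) (N : Set (Fin m → ZMod 2))
    (φ : (Fin m → ZMod 2) →ₗ[ZMod 2] (Fin c → ZMod 2)) (hφ : ∀ x ∈ N, φ x ≠ 0)
    {δ : ℝ} (hδ : 0 < δ) : ∃ β : ℝ, 0 < β ∧ ∀ (V : Type) [AddCommGroup V]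
    [Module (ZMod 2) V] [Fintype V] (W : Submodule (ZMod 2) (Fin m → ZMod 2)) (M : Finset V),
    0 ∉ M → (1 - 2 ^ (1 - (c : ℤ)) + δ) * Fintype.card V ≤ (M.card : ℝ) →
    2 * 2 ^ m ≤ (Fintype.card V : ℝ) * β →
    ∃ Q : Finset (W →ₗ[ZMod 2] V),
      β / 2 * (Fintype.card V : ℝ) ^ (Module.finrank (ZMod 2) W) ≤ Q.card ∧
      ∀ g ∈ Q, ∃ f : (Fin m → ZMod 2) →ₗ[ZMod 2] V, Function.Injective f ∧
        (∀ x ∈ N, f x ∈ M) ∧ f ∘ₗ W.subtype = g := by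
  obtain ⟨β, hβ, hcount⟩ := es_count hc N φ hφ hδ
  refine ⟨β, hβ, fun V _ _ _ W M h0 hM hv => ?_⟩
  have : Fintype ((Fin m → ZMod 2) →ₗ[ZMod 2] V) := Fintype.ofFinite _
  have hX := hcount V M h0 hM
  exact es_inj N V W (M : Set V) _
    (fun f hf => by simpa using hf) β hX hv

/-- Counting matroidal Erdős–Stone theorem. -/
theorem counting_erdos_stone {m : ℕ} (N : Set (Fin m → ZMod 2))
    (hN0 : 0 ∉ N) (hNne : N.Nonempty) {δ : ℝ} (hδ : 0 < δ) :
    ∃ n₀ : ℕ, 0 < n₀ ∧ ∃ α : ℝ, 0 < α ∧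
      ∀ n : ℕ, ∀ M : Set (Fin n → ZMod 2), 0 ∉ M → n₀ ≤ rankM M →
        (1 - 2 ^ (1 - (critNum N : ℤ)) + δ) * 2 ^ rankM M ≤ (M.ncard : ℝ) →
        α * ((2 : ℝ) ^ rankM M) ^ rankM N ≤ ((restrictionSet N M).ncard : ℝ) := by
  have hmem : critNum N ∈ {c | ∃ φ : (Fin m → ZMod 2) →ₗ[ZMod 2] (Fin c → ZMod 2),
      ∀ x ∈ N, φ x ≠ 0} :=
    Nat.sInf_mem ⟨m, LinearMap.id, fun x hx h => hN0 (by simpa using h ▸ hx)⟩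
  generalize critNum N = c at hmem ⊢
  obtain ⟨φ, hφ⟩ := hmem
  have hc : 1 ≤ c := by
    by_contra hlt
    obtain ⟨x, hx⟩ := hNne
    apply hφ x hx
    funext i
    exact absurd i.2 (by omega)
  obtain ⟨β, hβ, hcount⟩ := es_both hc N φ hφ hδ
  obtain ⟨n1, hn1⟩ := pow_unbounded_of_one_lt (2 * 2 ^ m / β) (one_lt_two (α := ℝ))
  set C : ℝ := (Fintype.card (N → N) : ℝ) with hC
  have hCpos : 0 < C := by rw [hC]; exact_mod_cast Fintype.card_pos_iff.mpr ⟨id⟩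
  refine ⟨n1 + 1, by omega, β / 2 / C, by positivity, fun n M hM0 hr hM => ?_⟩
  let V := Submodule.span (ZMod 2) M
  have : Fintype V := Fintype.ofFinite _
  have : Fintype ((Fin m → ZMod 2) →ₗ[ZMod 2] V) := Fintype.ofFinite _
  let W := Submodule.span (ZMod 2) N
  have : Fintype W := Fintype.ofFinite _
  have : Fintype (W →ₗ[ZMod 2] V) := Fintype.ofFinite _
  have hVc : (Fintype.card V : ℝ) = 2 ^ rankM M := by
    have := Module.card_eq_pow_finrank (K := ZMod 2) (V := V)
    rw [ZMod.card] at this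
    rw [rankM]
    exact_mod_cast this
  let MV : Finset V := Finset.univ.filter (fun v => (v : Fin n → ZMod 2) ∈ M)
  have hMV : (MV.card : ℝ) = M.ncard := by
    congr 1
    rw [← Set.ncard_coe_finset, ← Set.ncard_image_of_injective _ (Subtype.val_injective)]
    congr 1
    ext x
    simp only [Set.mem_image, Finset.mem_coe, MV, Finset.mem_filter, Finset.mem_univ, true_and]
    constructor
    · rintro ⟨v, hv, rfl⟩; exact hv
    · intro hx; exact ⟨⟨x, Submodule.subset_span hx⟩, hx, rfl⟩
  set v : ℝ := (Fintype.card V : ℝ) with hv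
  have hvpos : 0 < v := by rw [hVc]; positivity
  have hvbig : 2 * 2 ^ m ≤ v * β := by
    rw [div_lt_iff₀ hβ] at hn1
    have : (2:ℝ) ^ n1 ≤ v := by
      rw [hVc]; exact pow_le_pow_right₀ one_le_two (by omega)
    nlinarith
  obtain ⟨Q, hQ, hQg⟩ := hcount V W MV (by simpa [MV] using hM0)
    (by rw [← hv, hVc, hMV]; exact hM) hvbig
  -- injection into restrictionSet × (N → N)
  let R : Finset (Set (Fin n → ZMod 2)) := (restrictionSet N M).toFinite.toFinset
  have hRc : R.card = (restrictionSet N M).ncard :=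
    (Set.ncard_eq_toFinset_card _ _).symm
  let toW : N → W := fun x => ⟨x.1, Submodule.subset_span x.2⟩
  let im : (W →ₗ[ZMod 2] V) → Set (Fin n → ZMod 2) :=
    fun g => Set.range (fun x : N => ((g (toW x) : V) : Fin n → ZMod 2))
  have him : ∀ g ∈ Q, im g ∈ R := by
    intro g hg
    obtain ⟨f, hfi, hfX', rfl⟩ := hQg g hg
    rw [Set.Finite.mem_toFinset]
    refine ⟨?_, V.subtype ∘ₗ f, Subtype.val_injective.comp hfi, ?_⟩
    · rintro _ ⟨x, rfl⟩
      exact (Finset.mem_filter.mp (hfX' x.1 x.2)).2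
    · ext y
      constructor
      · rintro ⟨x, rfl⟩; exact ⟨x.1, x.2, rfl⟩
      · rintro ⟨x, hx, rfl⟩; exact ⟨⟨x, hx⟩, rfl⟩
  have hch : ∀ S : Set (Fin n → ZMod 2), S ∈ R →
      ∃ ψ : (Fin m → ZMod 2) → (Fin n → ZMod 2), S = ψ '' N := by
    intro S hS
    rw [Set.Finite.mem_toFinset] at hS
    obtain ⟨_, ψ, _, h⟩ := hS
    exact ⟨ψ, h⟩
  choose! ψ hψ using hch
  have hσ : ∀ g : W →ₗ[ZMod 2] V, ∃ σ : N → N, g ∈ Q → ∀ x : N,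
      ((g (toW x) : V) : Fin n → ZMod 2) = ψ (im g) (σ x) := by
    intro g
    by_cases hg : g ∈ Q
    · have : ∀ x : N, ∃ y : N, ((g (toW x) : V) : Fin n → ZMod 2) = ψ (im g) y := by
        intro x
        have h1 : ((g (toW x) : V) : Fin n → ZMod 2) ∈ im g := ⟨x, rfl⟩
        have h2 := hψ (im g) (him g hg)
        have h3 : ((g (toW x) : V) : Fin n → ZMod 2) ∈ ψ (im g) '' N := h2 ▸ h1
        obtain ⟨y, hy, hyx⟩ := h3
        exact ⟨⟨y, hy⟩, hyx.symm⟩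
      choose σ hσ using this
      exact ⟨σ, fun _ => hσ⟩
    · exact ⟨id, fun h => absurd h hg⟩
  choose σ hσ using hσ
  have hcard : Q.card ≤ (R ×ˢ (Finset.univ : Finset (N → N))).card := by
    refine Finset.card_le_card_of_injOn (fun g => (im g, σ g)) ?_ ?_
    · intro g hg
      exact Finset.mem_coe.mpr (Finset.mem_product.mpr ⟨him g hg, Finset.mem_univ _⟩)
    · intro g hg g' hg' h
      have h1 : im g = im g' := congrArg Prod.fst h
      have h2 : σ g = σ g' := congrArg Prod.snd h
      have h3 : ∀ x : N, g (toW x) = g' (toW x) := by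
        intro x
        apply Subtype.val_injective
        rw [hσ g hg x, hσ g' hg' x, h1, h2]
      ext1 ⟨w, hw⟩
      induction hw using Submodule.span_induction with
      | mem x hx => exact h3 ⟨x, hx⟩
      | zero => exact (map_zero g).trans (map_zero g').symm
      | add x y hx hy ih1 ih2 =>
        have e : (⟨x + y, Submodule.add_mem _ hx hy⟩ : W) = ⟨x, hx⟩ + ⟨y, hy⟩ := rfl
        rw [e, map_add, map_add, ih1, ih2]
      | smul a x hx ih =>
        have e : (⟨a • x, Submodule.smul_mem _ a hx⟩ : W) = a • ⟨x, hx⟩ := rfl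
        rw [e, map_smul, map_smul, ih]
  rw [Finset.card_product, Finset.card_univ, hRc] at hcard
  have hcard' : (Q.card : ℝ) ≤ (restrictionSet N M).ncard * C := by
    rw [hC]; exact_mod_cast hcard
  rw [← hVc, div_mul_eq_mul_div, div_le_iff₀ hCpos]
  exact hQ.trans hcard'
end

section
/- (Govaerts–Storme; matroidal Andrásfai–Erdős–Sós analogue.) Let t ≥ 2 be an integer and r ≥ t + 2. If M ⊆ 𝔽₂ⁿ \ {0} is a matroid of rank r with no PG(t−1,2)-restriction and |M| > 2ʳ·(1 − 2^{1−t} − 3·2^{−2−t}), then χ(M) ≤ t − 1. -/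
open scoped Classical

section
variable {V : Type} [AddCommGroup V] [Module (ZMod 2) V]

theorem v2 (x : V) : x + x = 0 := by
  have : (2 : ZMod 2) • x = 0 := by
    rw [show (2 : ZMod 2) = 0 from rfl, zero_smul]
  rwa [two_smul] at this

theorem v2c (x y : V) : x + (x + y) = y := by rw [← add_assoc, v2, zero_add]

theorem veq (x y : V) (h : x + y = 0) : x = y := by
  have := v2c x y
  rw [h, add_zero] at this
  exact this

/-- averaging over translates -/
theorem avg [Fintype V] {I : Type} [Fintype I] (M : Finset V) (k : I → V) (c : ℕ)
    (h : ∀ x, ∑ i, (if x + k i ∈ M then 1 else 0) ≤ c) :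
    Fintype.card I * M.card ≤ c * Fintype.card V := by
  have h1 : ∑ x : V, ∑ i, (if x + k i ∈ M then 1 else 0) = Fintype.card I * M.card := by
    rw [Finset.sum_comm]
    have : ∀ i, ∑ x : V, (if x + k i ∈ M then 1 else 0) = M.card := by
      intro i
      rw [Fintype.sum_equiv (Equiv.addRight (k i)) _ (fun y => if y ∈ M then 1 else 0)
        (fun x => by simp only [Equiv.coe_addRight]; congr)]
      simp
    simp [this]
  rw [← h1]
  refine (Finset.sum_le_sum (fun x _ => h x)).trans ?_
  simp [mul_comm]

theorem five [Fintype V] (M : Finset V) (tri : ∀ a b, a ∈ M → b ∈ M → a + b ∉ M)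
    (a b c d : V) (ha : a ∈ M) (hb : b ∈ M) (hc : c ∈ M) (hd : d ∈ M)
    (he : a + b + c + d ∈ M) : 16 * M.card ≤ 5 * Fintype.card V := by
  let k : (ZMod 2 × ZMod 2 × ZMod 2 × ZMod 2) → V :=
    fun i => i.1 • a + i.2.1 • b + i.2.2.1 • c + i.2.2.2 • d
  have hk : ∀ i j, k (i + j) = k i + k j := by
    intro i j; simp only [k, Prod.fst_add, Prod.snd_add, add_smul]; abel
  have key := avg M k 5 ?_
  · simpa using key
  have main : ∀ x ∈ M, ∑ i, (if x + k i ∈ M then 1 else 0) ≤ 5 := by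
    intro x hx
    let m : V → ℕ := fun y => if y ∈ M then 1 else 0
    have mx : ∀ y ∈ M, m (x + y) = 0 := by
      intro y hy
      simp only [m, if_neg (tri x y hx hy)]
    have me : ∀ y z, y + z ∈ M → m (x + y) + m (x + z) ≤ 1 := by
      intro y z hyz
      simp only [m]
      by_cases h1 : x + y ∈ M
      · by_cases h2 : x + z ∈ M
        · exfalso
          have := tri _ _ h1 h2
          apply this
          have e : x + y + (x + z) = (x + x) + (y + z) := by abel
          rw [e, v2, zero_add]; exact hyz
        · simp only [h2, if_false]; split_ifs <;> simp
      · simp only [h1, if_false]; split_ifs <;> simp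
    have hs : ∑ i, (if x + k i ∈ M then 1 else 0) = ∑ i, m (x + k i) := rfl
    have u2 : (Finset.univ : Finset (ZMod 2)) = {0, 1} := rfl
    have sp : ∀ f : ZMod 2 → ℕ, ∑ i, f i = f 0 + f 1 := by
      intro f; rw [u2]; simp
    rw [hs]
    simp only [Fintype.sum_prod_type, sp, k, zero_smul, one_smul, zero_add, add_zero]
    have m0 : m x ≤ 1 := by simp only [m]; split_ifs <;> simp
    have h1 := mx a ha
    have h2 := mx b hb
    have h3 := mx c hc
    have h4 := mx d hd
    have h5 := mx _ he
    -- vertices: ab ac ad bc bd cd bcd acd abd abc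
    -- edges of two five-cycles
    have E : ∀ y z w, w ∈ M → y + z + w = 0 → m (x + y) + m (x + z) ≤ 1 := by
      intro y z w hw h
      apply me; rw [veq _ _ h]; exact hw
    have tt : ∀ y : V, 2 • y = 0 := by intro y; rw [two_smul, v2]
    have Q : ∀ p q r s : ℕ, Even p → Even q → Even r → Even s →
        p • a + q • b + r • c + s • d = 0 := by
      rintro p q r s ⟨p, rfl⟩ ⟨q, rfl⟩ ⟨r, rfl⟩ ⟨s, rfl⟩
      simp [add_smul, v2]
    have QQ : ∀ (y : V) (p q r s : ℕ), y = p • a + q • b + r • c + s • d → Even p → Even q → Even r → Even s → y = 0 := by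
      rintro y p q r s rfl h1 h2 h3 h4; exact Q _ _ _ _ h1 h2 h3 h4
    have e1 := E (a + b) (c + d) _ he (QQ _ 2 2 2 2 (by module) (by decide) (by decide) (by decide) (by decide))
    have e2 := E (c + d) (b + c + d) _ hb (QQ _ 0 2 2 2 (by module) (by decide) (by decide) (by decide) (by decide))
    have e3 := E (b + c + d) (b + c) _ hd (QQ _ 0 2 2 2 (by module) (by decide) (by decide) (by decide) (by decide))
    have e4 := E (b + c) (a + b + c) _ ha (QQ _ 2 2 2 0 (by module) (by decide) (by decide) (by decide) (by decide))
    have e5 := E (a + b + c) (a + b) _ hc (QQ _ 2 2 2 0 (by module) (by decide) (by decide) (by decide) (by decide))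
    have f1 := E (a + c) (b + d) _ he (QQ _ 2 2 2 2 (by module) (by decide) (by decide) (by decide) (by decide))
    have f2 := E (b + d) (a + b + d) _ ha (QQ _ 2 2 0 2 (by module) (by decide) (by decide) (by decide) (by decide))
    have f3 := E (a + b + d) (a + d) _ hb (QQ _ 2 2 0 2 (by module) (by decide) (by decide) (by decide) (by decide))
    have f4 := E (a + d) (a + c + d) _ hc (QQ _ 2 0 2 2 (by module) (by decide) (by decide) (by decide) (by decide))
    have f5 := E (a + c + d) (a + c) _ hd (QQ _ 2 0 2 2 (by module) (by decide) (by decide) (by decide) (by decide))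
    omega
  intro x
  by_cases h : ∃ i, x + k i ∈ M
  · obtain ⟨i, hi⟩ := h
    have := main _ hi
    rw [Fintype.sum_equiv (Equiv.addLeft i) _ (fun j => if x + k j ∈ M then 1 else 0)
      (fun j => by simp [hk, add_assoc])] at this
    exact this
  · push Not at h
    simp [h]

theorem seven [Fintype V] (M : Finset V) (L : List V) (hL : ∀ x ∈ L, x ∈ M) (hs : L.sum = 0)
    (hodd : Odd L.length) (h7 : 7 ≤ L.length)
    (hmin : ∀ L' : List V, (∀ x ∈ L', x ∈ M) → Odd L'.length → L'.length < L.length → L'.sum ≠ 0) :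
    7 * M.card ≤ 2 * Fintype.card V := by
  have key := avg M (fun i : Fin 7 => (L.take i).sum) 2 ?_
  · simpa using key
  intro x
  have hsub : ∀ i j : ℕ, i ≤ j → L.take i ++ (L.take j).drop i = L.take j := by
    intro i j hij
    have := List.take_append_drop i (L.take j)
    rwa [List.take_take, min_eq_left hij] at this
  have P : ∀ i j : ℕ, i < j → j ≤ 6 → (j - i ≠ 2 ∧ j - i ≠ 5) →
      (if x + (L.take i).sum ∈ M then 1 else 0) + (if x + (L.take j).sum ∈ M then 1 else 0) ≤ 1 := by
    intro i j hij hj hne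
    by_cases h1 : x + (L.take i).sum ∈ M
    swap
    · simp only [h1, if_false]; split_ifs <;> simp
    by_cases h2 : x + (L.take j).sum ∈ M
    swap
    · simp only [h2, if_false]; split_ifs <;> simp
    exfalso
    have e1 : (L.take j).sum = (L.take i).sum + ((L.take j).drop i).sum := by
      rw [← List.sum_append, hsub i j hij.le]
    have e2 : (L.take j).sum + (L.drop j).sum = 0 := by
      rw [← List.sum_append, List.take_append_drop, hs]
    have e3 := veq _ _ e2
    rcases Nat.even_or_odd (j - i) with he | ho
    · refine hmin ((x + (L.take i).sum) :: (x + (L.take j).sum) :: (L.take i ++ L.drop j)) ?_ ?_ ?_ ?_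
      · intro y hy
        simp only [List.mem_cons, List.mem_append] at hy
        rcases hy with rfl | rfl | hy | hy
        · exact h1
        · exact h2
        · exact hL _ (List.mem_of_mem_take hy)
        · exact hL _ (List.mem_of_mem_drop hy)
      · simp only [List.length_cons, List.length_append, List.length_take, List.length_drop]
        rw [Nat.odd_iff] at *; rw [Nat.even_iff] at *; omega
      · simp only [List.length_cons, List.length_append, List.length_take, List.length_drop]
        rw [Nat.even_iff] at *; omega
      · simp only [List.sum_cons, List.sum_append, ← e3]
        generalize (L.take i).sum = u
        generalize (L.take j).sum = v
        rw [show x + u + (x + v + (u + v)) = (x + x) + (u + u) + (v + v) by abel]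
        simp [v2]
    · refine hmin ((x + (L.take i).sum) :: (x + (L.take j).sum) :: (L.take j).drop i) ?_ ?_ ?_ ?_
      · intro y hy
        simp only [List.mem_cons] at hy
        rcases hy with rfl | rfl | hy
        · exact h1
        · exact h2
        · exact hL _ (List.mem_of_mem_take (List.mem_of_mem_drop hy))
      · simp only [List.length_cons, List.length_take, List.length_drop]
        rw [Nat.odd_iff] at *; omega
      · simp only [List.length_cons, List.length_take, List.length_drop]
        rw [Nat.odd_iff] at *; omega
      · simp only [List.sum_cons, e1]
        generalize (L.take i).sum = u
        generalize ((L.take j).drop i).sum = v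
        rw [show x + u + (x + (u + v) + v) = (x + x) + (u + u) + (v + v) by abel]
        simp [v2]
  have B : ∀ i : ℕ, (if x + (L.take i).sum ∈ M then 1 else 0) ≤ 1 := by
    intro i; split_ifs <;> simp
  generalize hg : (fun i : ℕ => if x + (L.take i).sum ∈ M then 1 else 0) = g at *
  have hg' : ∀ i : ℕ, (if x + (L.take i).sum ∈ M then 1 else 0) = g i := by
    intro i; rw [← hg]
  simp only [hg'] at *
  simp only [Fin.sum_univ_succ]
  simp
  have p01 := P 0 1 (by omega) (by omega) (by omega)
  have p03 := P 0 3 (by omega) (by omega) (by omega)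
  have p04 := P 0 4 (by omega) (by omega) (by omega)
  have p06 := P 0 6 (by omega) (by omega) (by omega)
  have p12 := P 1 2 (by omega) (by omega) (by omega)
  have p14 := P 1 4 (by omega) (by omega) (by omega)
  have p15 := P 1 5 (by omega) (by omega) (by omega)
  have p23 := P 2 3 (by omega) (by omega) (by omega)
  have p25 := P 2 5 (by omega) (by omega) (by omega)
  have p26 := P 2 6 (by omega) (by omega) (by omega)
  have p34 := P 3 4 (by omega) (by omega) (by omega)
  have p36 := P 3 6 (by omega) (by omega) (by omega)
  have p45 := P 4 5 (by omega) (by omega) (by omega)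
  have p56 := P 5 6 (by omega) (by omega) (by omega)
  have b0 := B 0
  have b1 := B 1
  have b2 := B 2
  have b3 := B 3
  have b4 := B 4
  have b5 := B 5
  have b6 := B 6
  change g 0 + (g 1 + (g 2 + (g 3 + (g 4 + (g 5 + g 6))))) ≤ 2
  clear P B hmin hg hg' hsub
  omega

theorem noodd [Fintype V] (M : Finset V) (h0 : (0 : V) ∉ M)
    (tri : ∀ a b, a ∈ M → b ∈ M → a + b ∉ M) (hc : 5 * Fintype.card V < 16 * M.card) :
    ∀ n, ∀ L : List V, L.length = n → (∀ x ∈ L, x ∈ M) → Odd L.length → L.sum ≠ 0 := by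
  intro n
  induction n using Nat.strong_induction_on with
  | _ n ih =>
  intro L hn hL ho hs
  by_cases h7 : 7 ≤ L.length
  · have := seven M L hL hs ho h7 (fun L' h1 h2 h3 => ih L'.length (by omega) L' rfl h1 h2)
    omega
  · match L, hL, hs, ho, h7 with
    | [], _, _, ho, _ => simp at ho
    | [a], hL, hs, _, _ => simp at hs hL; subst hs; exact h0 hL
    | [a, b], _, _, ho, _ => simp [Nat.odd_iff] at ho
    | [a, b, c], hL, hs, ho, _ =>
      simp at hs hL
      refine tri b c hL.2.1 hL.2.2 ?_
      rw [← veq _ _ hs]; exact hL.1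
    | [a, b, c, d], _, _, ho, _ => simp [Nat.odd_iff] at ho
    | [a, b, c, d, e], hL, hs, ho, _ =>
      simp at hs hL
      have := five M tri a b c d hL.1 hL.2.1 hL.2.2.1 hL.2.2.2.1 (by
        have : a + b + c + d = e := by
          apply veq; rw [← hs]; abel
        rw [this]; exact hL.2.2.2.2)
      omega
    | [a, b, c, d, e, f], _, _, ho, _ => simp [Nat.odd_iff] at ho
    | a :: b :: c :: d :: e :: f :: g :: L, _, _, _, h7 => simp at h7

theorem base [Fintype V] (M : Finset V) (h0 : (0 : V) ∉ M)
    (tri : ∀ a b, a ∈ M → b ∈ M → a + b ∉ M) (hc : 5 * Fintype.card V < 16 * M.card) :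
    ∃ W : Submodule (ZMod 2) V, (∀ x ∈ W, x ∉ M) ∧ Nat.card W * 2 = Fintype.card V := by
  have no := noodd M h0 tri hc
  have hne : M.Nonempty := by
    rw [← Finset.card_pos]; omega
  obtain ⟨m, hm⟩ := hne
  let U : Submodule (ZMod 2) V := Submodule.span (ZMod 2) {x | ∃ a ∈ M, ∃ b ∈ M, x = a + b}
  have hU : ∀ x ∈ U, ∃ L : List V, (∀ y ∈ L, y ∈ M) ∧ Even L.length ∧ L.sum = x := by
    intro x hx
    induction hx using Submodule.span_induction with
    | mem x hx =>
      obtain ⟨a, ha, b, hb, rfl⟩ := hx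
      exact ⟨[a, b], by simp [ha, hb], by simp, by simp⟩
    | zero => exact ⟨[], by simp, by simp, by simp⟩
    | add x y _ _ hx hy =>
      obtain ⟨L, h1, h2, h3⟩ := hx
      obtain ⟨L', h1', h2', h3'⟩ := hy
      refine ⟨L ++ L', ?_, ?_, ?_⟩
      · intro z hz; rcases List.mem_append.1 hz with h | h; exacts [h1 _ h, h1' _ h]
      · rw [List.length_append]; exact h2.add h2'
      · rw [List.sum_append, h3, h3']
    | smul c x _ hx =>
      have : c = 0 ∨ c = 1 := by revert c; decide
      rcases this with rfl | rfl
      · exact ⟨[], by simp, by simp, by simp⟩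
      · simpa using hx
  have hmU : m ∉ U := by
    intro h
    obtain ⟨L, h1, h2, h3⟩ := hU m h
    refine no _ (m :: L) rfl ?_ ?_ ?_
    · intro y hy; rcases List.mem_cons.1 hy with rfl | h; exacts [hm, h1 _ h]
    · rw [List.length_cons]; exact h2.add_one
    · rw [List.sum_cons, h3, v2]
  obtain ⟨f, hf1, hf2⟩ := Submodule.exists_le_ker_of_notMem hmU
  have hf : ∀ x ∈ M, f x ≠ 0 := by
    intro x hx h
    have : x + m ∈ U := Submodule.subset_span ⟨x, hx, m, hm, rfl⟩
    have := hf2 this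
    rw [LinearMap.mem_ker, map_add, h, zero_add] at this
    exact hf1 this
  refine ⟨LinearMap.ker f, fun x hx hxM => hf x hxM hx, ?_⟩
  have hsurj : Function.Surjective f := by
    apply LinearMap.surjective
    intro h; apply hf1; simp [h]
  have e1 := Submodule.card_eq_card_quotient_mul_card (LinearMap.ker f)
  have e2 := Nat.card_congr (f.quotKerEquivOfSurjective hsurj).toEquiv
  rw [Nat.card_zmod] at e2
  rw [e2, Nat.card_eq_fintype_card (α := V)] at e1
  rw [e1, mul_comm]

theorem mem_supx (S : Submodule (ZMod 2) V) (x y : V) :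
    y ∈ S ⊔ Submodule.span (ZMod 2) {x} ↔ y ∈ S ∨ y + x ∈ S := by
  rw [Submodule.mem_sup]
  constructor
  · rintro ⟨s, hs, z, hz, rfl⟩
    obtain ⟨c, rfl⟩ := Submodule.mem_span_singleton.1 hz
    have : c = 0 ∨ c = 1 := by clear hz; revert c; decide
    rcases this with rfl | rfl
    · left; simpa using hs
    · right; rw [one_smul, add_assoc, v2, add_zero]; exact hs
  · rintro (h | h)
    · exact ⟨y, h, 0, zero_mem _, add_zero y⟩
    · exact ⟨y + x, h, x, Submodule.mem_span_singleton_self x, by rw [add_assoc, v2, add_zero]⟩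

theorem card_supx [Fintype V] (S : Submodule (ZMod 2) V) (x : V) (hx : x ∉ S) :
    Nat.card ↥(S ⊔ Submodule.span (ZMod 2) {x}) = 2 * Nat.card S := by
  have h : ((S ⊔ Submodule.span (ZMod 2) {x} : Submodule (ZMod 2) V) : Set V)
      = (S : Set V) ∪ (fun y => y + x) '' (S : Set V) := by
    ext y
    simp only [SetLike.mem_coe, mem_supx, Set.mem_union, Set.mem_image]
    refine or_congr Iff.rfl ⟨fun h => ⟨_, h, by rw [add_assoc, v2, add_zero]⟩, ?_⟩
    rintro ⟨z, hz, rfl⟩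
    rw [add_assoc, v2, add_zero]; exact hz
  have e1 : Nat.card ↥(S ⊔ Submodule.span (ZMod 2) {x})
      = ((S ⊔ Submodule.span (ZMod 2) {x} : Submodule (ZMod 2) V) : Set V).ncard :=
    Nat.card_coe_set_eq _
  have e2 : Nat.card S = (S : Set V).ncard := Nat.card_coe_set_eq _
  rw [e1, e2, h, Set.ncard_union_eq _ (Set.toFinite _) (Set.toFinite _),
    Set.ncard_image_of_injective _ (add_left_injective x)]
  · omega
  · rw [Set.disjoint_left]
    rintro y hy ⟨z, hz, rfl⟩
    apply hx
    have := S.add_mem hz hy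
    rwa [v2c] at this

theorem greedy [Fintype V] (k : ℕ) (B : Finset V) (W L : Submodule (ZMod 2) V)
    (hW : Nat.card W * 2 ^ (k + 1) = Fintype.card V)
    (hB : 2 ^ (k + 5) * (B.filter (· ∉ W)).card < 3 * Fintype.card V)
    (hL : Nat.card L = 4) (hLW : L ≤ W) (hLB : ∀ x ∈ L, x ≠ 0 → x ∉ B) :
    ∀ j ≤ k + 1, ∃ S : Submodule (ZMod 2) V, Nat.card S = 2 ^ (j + 2) ∧
      Nat.card ↥(W ⊔ S) ≤ Nat.card W * 2 ^ j ∧ ∀ x ∈ S, x ≠ 0 → x ∉ B := by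
  intro j
  induction j with
  | zero =>
    intro _
    refine ⟨L, by simpa using hL, ?_, hLB⟩
    rw [sup_eq_left.2 hLW]; simp
  | succ j ih =>
    intro hj
    obtain ⟨S, h1, h2, h3⟩ := ih (by omega)
    -- bad set
    let bad : Finset V := (Finset.univ.filter (· ∈ W ⊔ S)) ∪
      Finset.image₂ (fun b s => b + s) (B.filter (· ∉ W)) (Finset.univ.filter (· ∈ S))
    have cS : (Finset.univ.filter (· ∈ S)).card = 2 ^ (j + 2) := by
      rw [← h1, Nat.card_eq_fintype_card, Fintype.card_subtype]
    have cWS : (Finset.univ.filter (· ∈ W ⊔ S)).card ≤ Nat.card W * 2 ^ j := by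
      rw [← Fintype.card_subtype, ← Nat.card_eq_fintype_card]; exact h2
    have cbad : bad.card < Fintype.card V := by
      have c1 : bad.card ≤ Nat.card W * 2 ^ j + (B.filter (· ∉ W)).card * 2 ^ (j + 2) := by
        refine (Finset.card_union_le _ _).trans (add_le_add cWS ?_)
        refine (Finset.card_image₂_le _ _ _).trans ?_
        rw [cS]
      obtain ⟨i, rfl⟩ : ∃ i, k = j + i := ⟨k - j, by omega⟩
      have hp : 1 ≤ 2 ^ i := Nat.one_le_two_pow
      generalize (B.filter (· ∉ W)).card = β at *
      have q1 : Nat.card W * 2 ^ j * 2 ≤ Fintype.card V := by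
        rw [← hW, pow_succ, pow_add]
        calc Nat.card W * 2 ^ j * 2 = Nat.card W * (2 ^ j * 1 * 2) := by ring
          _ ≤ _ := by gcongr
      have q2 : 8 * (β * 2 ^ (j + 2)) < 3 * Fintype.card V := by
        refine lt_of_le_of_lt ?_ hB
        calc 8 * (β * 2 ^ (j + 2)) = 2 ^ (j + 5) * 1 * β := by ring
          _ ≤ 2 ^ (j + 5) * 2 ^ i * β := by gcongr
          _ = _ := by ring
      omega
    obtain ⟨x, hx⟩ : ∃ x, x ∉ bad := by
      by_contra hcon
      push Not at hcon
      rw [Finset.eq_univ_of_forall hcon, Finset.card_univ] at cbad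
      exact lt_irrefl _ cbad
    have hxWS : x ∉ W ⊔ S := by
      intro h; apply hx; simp [bad, h]
    have hxB : ∀ s ∈ S, x + s ∉ B := by
      intro s hs hb
      apply hx
      apply Finset.mem_union_right
      refine Finset.mem_image₂.2 ⟨x + s, ?_, s, by simpa using hs, by rw [add_assoc, v2, add_zero]⟩
      rw [Finset.mem_filter]
      refine ⟨hb, fun hw => hxWS ?_⟩
      have := (W ⊔ S).add_mem (Submodule.mem_sup_left hw) (Submodule.mem_sup_right hs)
      rwa [add_assoc, v2, add_zero] at this
    refine ⟨S ⊔ Submodule.span (ZMod 2) {x}, ?_, ?_, ?_⟩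
    · rw [card_supx _ _ (fun h => hxWS (Submodule.mem_sup_right h)), h1]; ring
    · rw [← sup_assoc, card_supx _ _ hxWS, pow_succ, ← mul_assoc]; omega
    · intro y hy hy0
      rcases (mem_supx _ _ _).1 hy with h | h
      · exact h3 y h hy0
      · have := hxB _ h
        rwa [add_comm y x, v2c] at this
end

theorem gsmain (k : ℕ) : ∀ (V : Type) [AddCommGroup V] [Module (ZMod 2) V] [Fintype V]
    (B : Finset V), (0 : V) ∈ B →
    (∀ S : Submodule (ZMod 2) V, Nat.card S = 2 ^ (k + 2) → ∃ x ∈ S, x ≠ 0 ∧ x ∈ B) →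
    2 ^ (k + 4) * B.card < 11 * Fintype.card V →
    ∃ W : Submodule (ZMod 2) V, (∀ x ∈ W, x ∈ B) ∧ Nat.card W * 2 ^ (k + 1) = Fintype.card V := by
  have line : ∀ (V : Type) [AddCommGroup V] [Module (ZMod 2) V] [Fintype V] (M : Finset V)
      (_ : (0 : V) ∉ M) (a b : V) (_ : a ∈ M) (_ : b ∈ M) (_ : a + b ∈ M),
      ∃ L : Submodule (ZMod 2) V, Nat.card L = 4 ∧ (∀ x ∈ L, x ≠ 0 → x ∈ M) ∧
        ∀ W : Submodule (ZMod 2) V, a ∈ W → b ∈ W → L ≤ W := by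
    intro V _ _ _ M h0 a b ha hb hab
    have hmem : ∀ y, y ∈ (⊥ ⊔ Submodule.span (ZMod 2) {a}) ⊔ Submodule.span (ZMod 2) {b} →
      y = 0 ∨ y = a ∨ y = b ∨ y = a + b := by
      intro y hy
      simp only [mem_supx, Submodule.mem_bot] at hy
      rcases hy with (h | h) | (h | h)
      · exact Or.inl h
      · exact Or.inr (Or.inl (veq _ _ h))
      · exact Or.inr (Or.inr (Or.inl (veq _ _ h)))
      · right; right; right
        apply veq; rw [← h]; abel
    refine ⟨(⊥ ⊔ Submodule.span (ZMod 2) {a}) ⊔ Submodule.span (ZMod 2) {b}, ?_, ?_, ?_⟩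
    · rw [card_supx, card_supx]
      · simp
      · rw [Submodule.mem_bot]; rintro rfl; exact h0 ha
      · rw [mem_supx]
        rintro (h | h)
        · rw [Submodule.mem_bot] at h; subst h; exact h0 hb
        · rw [Submodule.mem_bot, add_comm] at h; rw [h] at hab; exact h0 hab
    · intro y hy hy0
      rcases hmem y hy with h | rfl | rfl | rfl
      · exact absurd h hy0
      all_goals assumption
    · intro W hWa hWb y hy
      rcases hmem y hy with rfl | rfl | rfl | rfl
      · exact zero_mem _
      · exact hWa
      · exact hWb
      · exact W.add_mem hWa hWb
  induction k with
  | zero =>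
    intro V _ _ _ B h0 hfree hc
    have hcc := Finset.card_add_card_compl B
    obtain ⟨W, hW1, hW2⟩ := base Bᶜ (by simpa using h0) (by
      intro a b ha hb hab
      obtain ⟨L, hL1, hL2, -⟩ := line V Bᶜ (by simpa using h0) a b ha hb hab
      obtain ⟨x, hx, hx0, hxB⟩ := hfree L (by simpa using hL1)
      exact Finset.mem_compl.1 (hL2 x hx hx0) hxB) (by norm_num at hc; omega)
    exact ⟨W, fun x hx => by simpa using hW1 x hx, by simpa using hW2⟩
  | succ k ih =>
    intro V _ _ _ B h0 hfree hc
    obtain ⟨p, hp⟩ : ∃ p, p ∉ B := by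
      by_contra hcon
      push Not at hcon
      rw [Finset.eq_univ_of_forall hcon, Finset.card_univ] at hc
      have : 11 ≤ 2 ^ (k + 1 + 4) := by
        have : 1 ≤ 2 ^ k := Nat.one_le_two_pow
        calc 11 ≤ 32 * 1 := by norm_num
          _ ≤ 32 * 2 ^ k := by omega
          _ = _ := by ring
      have := Nat.mul_le_mul_right (Fintype.card V) this
      omega
    have hp0 : p ≠ 0 := by rintro rfl; exact hp h0
    let P : Submodule (ZMod 2) V := ⊥ ⊔ Submodule.span (ZMod 2) {p}
    have hPm : ∀ y, y ∈ P → y = 0 ∨ y = p := by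
      intro y hy
      rcases (mem_supx _ _ _).1 hy with h | h
      · exact Or.inl h
      · exact Or.inr (veq _ _ h)
    have hpP : p ∈ P := Submodule.mem_sup_right (Submodule.mem_span_singleton_self p)
    have hPc : Nat.card P = 2 := by
      rw [card_supx]
      · simp
      · simpa using hp0
    have hcomap : ∀ S : Submodule (ZMod 2) (V ⧸ P), Nat.card (S.comap P.mkQ) = 2 * Nat.card S := by
      intro S
      let f : S.comap P.mkQ →ₗ[ZMod 2] S := P.mkQ.restrict (fun x hx => hx)
      have hf : Function.Surjective f := by
        rintro ⟨y, hy⟩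
        obtain ⟨x, rfl⟩ := P.mkQ_surjective y
        exact ⟨⟨x, hy⟩, rfl⟩
      have e1 := Submodule.card_eq_card_quotient_mul_card (LinearMap.ker f)
      have e2 := Nat.card_congr (f.quotKerEquivOfSurjective hf).toEquiv
      have e3 : Nat.card (LinearMap.ker f) = 2 := by
        refine Eq.trans ?_ hPc
        refine Nat.card_congr ⟨fun x => ⟨x.1.1, ?_⟩, fun x => ⟨⟨x.1, ?_⟩, ?_⟩, fun _ => rfl, fun _ => rfl⟩
        · have := x.2
          rw [LinearMap.mem_ker] at this
          have := congrArg Subtype.val this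
          exact (Submodule.Quotient.mk_eq_zero P).1 this
        · have : P.mkQ x.1 = 0 := (Submodule.Quotient.mk_eq_zero P).2 x.2
          rw [Submodule.mem_comap, this]; exact zero_mem _
        · rw [LinearMap.mem_ker]
          apply Subtype.ext
          exact (Submodule.Quotient.mk_eq_zero P).2 x.2
      rw [e2, e3] at e1
      omega
    have hVc : Fintype.card V = 2 * Fintype.card (V ⧸ P) := by
      have e1 := Submodule.card_eq_card_quotient_mul_card P
      rw [hPc, Nat.card_eq_fintype_card, Nat.card_eq_fintype_card] at e1
      omega
    obtain ⟨W', hW1, hW2⟩ := ih (V ⧸ P) (B.image P.mkQ)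
      (Finset.mem_image.2 ⟨0, h0, map_zero _⟩) (by
        intro S hS
        obtain ⟨x, hx, hx0, hxB⟩ := hfree (S.comap P.mkQ) (by rw [hcomap, hS]; ring)
        refine ⟨P.mkQ x, hx, ?_, Finset.mem_image_of_mem _ hxB⟩
        intro h
        rcases hPm x ((Submodule.Quotient.mk_eq_zero P).1 h) with rfl | rfl
        · exact hx0 rfl
        · exact hp hxB) (by
        have h1 : (B.image P.mkQ).card ≤ B.card := Finset.card_image_le
        have h2 := Nat.mul_le_mul_left (2 ^ (k + 4)) h1
        rw [hVc, show 2 ^ (k + 1 + 4) = 2 * 2 ^ (k + 4) by ring, mul_assoc] at hc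
        omega)
    let W : Submodule (ZMod 2) V := W'.comap P.mkQ
    have hWc : Nat.card W * 2 ^ (k + 1) = Fintype.card V := by
      rw [hVc, ← hW2, hcomap]; ring
    have hWp : ∀ x ∈ W, x ∈ B ∨ x + p ∈ B := by
      intro x hx
      obtain ⟨b, hb, hbx⟩ := Finset.mem_image.1 (hW1 _ hx)
      have : b - x ∈ P := (Submodule.Quotient.eq P).1 hbx
      rcases hPm _ this with h | h
      · left; rw [← sub_eq_zero.1 h]; exact hb
      · right; rw [← h]; simpa using hb
    have hpW : p ∈ W := by
      have : P.mkQ p = 0 := (Submodule.Quotient.mk_eq_zero P).2 hpP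
      change P.mkQ p ∈ W'
      rw [this]; exact zero_mem _
    -- counting B ∩ W
    have hWF : Nat.card W = (Finset.univ.filter (· ∈ W)).card := by
      rw [Nat.card_eq_fintype_card, Fintype.card_subtype]
    have hBW : Nat.card W ≤ 2 * (B.filter (· ∈ W)).card := by
      have : Finset.univ.filter (· ∈ W) ⊆
          B.filter (· ∈ W) ∪ (B.filter (· ∈ W)).image (· + p) := by
        intro x hx
        have hx := (Finset.mem_filter.1 hx).2
        rcases hWp x hx with h | h
        · exact Finset.mem_union_left _ (Finset.mem_filter.2 ⟨h, hx⟩)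
        · exact Finset.mem_union_right _ (Finset.mem_image.2
            ⟨x + p, Finset.mem_filter.2 ⟨h, W.add_mem hx hpW⟩, by rw [add_assoc, v2, add_zero]⟩)
      have h1 := Finset.card_le_card this
      have h2 := Finset.card_union_le (B.filter (· ∈ W)) ((B.filter (· ∈ W)).image (· + p))
      have h3 : ((B.filter (· ∈ W)).image (· + p)).card ≤ (B.filter (· ∈ W)).card :=
        Finset.card_image_le
      omega
    have hsplit : (B.filter (· ∈ W)).card + (B.filter (· ∉ W)).card = B.card :=
      Finset.card_filter_add_card_filter_not _
    have hout : 2 ^ (k + 5) * (B.filter (· ∉ W)).card < 3 * Fintype.card V := by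
      have h2 := Nat.mul_le_mul_left (2 ^ (k + 4)) hBW
      have h3 : 2 ^ (k + 4) * Nat.card W = 8 * Fintype.card V := by rw [← hWc]; ring
      rw [← hsplit] at hc
      have h4 : 2 ^ (k + 5) = 2 * 2 ^ (k + 4) := by ring
      have h5 : 2 ^ (k + 1 + 4) = 2 * 2 ^ (k + 4) := by ring
      rw [h5] at hc
      rw [h4]
      rw [h3] at h2
      generalize (B.filter (· ∈ W)).card = u at *
      generalize (B.filter (· ∉ W)).card = v at *
      generalize 2 ^ (k + 4) = q at *
      nlinarith
    -- the matroid restricted to W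
    let N : Finset W := Finset.univ.filter (fun x => x.1 ∉ B)
    have hN0 : (0 : W) ∉ N := by simp [N, h0]
    have hNc : N.card + (B.filter (· ∈ W)).card = Nat.card W := by
      have e : (B.filter (· ∈ W)).card = (Finset.univ.filter (fun x : W => x.1 ∈ B)).card := by
        symm
        refine Finset.card_bij (fun x _ => x.1) ?_ ?_ ?_
        · intro x hx
          exact Finset.mem_filter.2 ⟨(Finset.mem_filter.1 hx).2, x.2⟩
        · intro x _ y _ h; exact Subtype.ext h
        · intro y hy
          have := Finset.mem_filter.1 hy
          exact ⟨⟨y, this.2⟩, Finset.mem_filter.2 ⟨Finset.mem_univ _, this.1⟩, rfl⟩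
      rw [e, add_comm, Nat.card_eq_fintype_card, ← Finset.card_univ]
      exact Finset.card_filter_add_card_filter_not _
    obtain ⟨U, hU1, hU2⟩ := base N hN0 (by
      intro a b ha hb hab
      have e0 : (0 : V) ∉ Bᶜ := by simpa using h0
      obtain ⟨L, hL1, hL2, hL3⟩ := line V Bᶜ e0 a.1 b.1
        (by simpa [N] using ha) (by simpa [N] using hb) (by simpa [N] using hab)
      obtain ⟨S, hS1, -, hS3⟩ := greedy k B W L hWc hout hL1 (hL3 W a.2 b.2)
        (fun x hx hx0 => Finset.mem_compl.1 (hL2 x hx hx0)) (k + 1) le_rfl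
      obtain ⟨x, hx, hx0, hxB⟩ := hfree S hS1
      exact hS3 x hx hx0 hxB) (by
      rw [← Nat.card_eq_fintype_card]
      have h1 : 2 ^ (k + 1) * (16 * B.card) < 2 ^ (k + 1) * (11 * Nat.card W) := by
        calc 2 ^ (k + 1) * (16 * B.card) = 2 ^ (k + 1 + 4) * B.card := by ring
          _ < _ := hc
          _ = _ := by rw [← hWc]; ring
      have h2 := lt_of_mul_lt_mul_left h1 (Nat.zero_le _)
      omega)
    refine ⟨U.map W.subtype, ?_, ?_⟩
    · rintro _ ⟨y, hy, rfl⟩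
      have := hU1 y hy
      simpa [N] using this
    · have e : Nat.card (U.map W.subtype) = Nat.card U :=
        (Nat.card_congr (Submodule.equivMapOfInjective W.subtype W.injective_subtype U).toEquiv).symm
      rw [e, ← hWc, Nat.card_eq_fintype_card (α := W), ← hU2]; ring

/-- Govaerts–Storme: a matroidal analogue of the Andrásfai–Erdős–Sós theorem. -/
theorem govaerts_storme (t r n : ℕ) (ht : 2 ≤ t) (hr : t + 2 ≤ r)
    (M : Set (Fin n → ZMod 2)) (hM0 : 0 ∉ M) (hrank : rankM M = r)
    (hfree : ¬ HasRestriction {x : Fin t → ZMod 2 | x ≠ 0} M)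
    (hsize : (2 : ℝ) ^ r * (1 - 2 ^ (1 - (t : ℤ)) - 3 * 2 ^ (-2 - (t : ℤ))) < (M.ncard : ℝ)) :
    critNum M ≤ t - 1 := by
  obtain ⟨k, rfl⟩ : ∃ k, t = k + 2 := ⟨t - 2, by omega⟩
  let X := Submodule.span (ZMod 2) M
  have hXc : Fintype.card X = 2 ^ r := by
    rw [Module.card_eq_pow_finrank (K := ZMod 2) (V := X), ZMod.card, ← hrank]; rfl
  let N : Finset X := Finset.univ.filter (fun x => x.1 ∈ M)
  have hN : N.card = M.ncard := by
    rw [← Set.ncard_coe_finset]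
    have : M = Subtype.val '' (N : Set X) := by
      ext y
      constructor
      · intro hy; exact ⟨⟨y, Submodule.subset_span hy⟩, by simp [N, hy], rfl⟩
      · rintro ⟨x, hx, rfl⟩; simpa [N] using hx
    conv_rhs => rw [this]
    rw [Set.ncard_image_of_injective _ Subtype.val_injective]
  have hcc := Finset.card_add_card_compl N
  obtain ⟨W, hW1, hW2⟩ := gsmain k X Nᶜ (by simp [N, hM0]) (by
    intro S hS
    by_contra hcon
    push Not at hcon
    apply hfree
    have hfin : Module.finrank (ZMod 2) S = k + 2 := by
      rw [Nat.card_eq_fintype_card, Module.card_eq_pow_finrank (K := ZMod 2) (V := S), ZMod.card] at hS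
      exact Nat.pow_right_injective le_rfl hS
    let e : (Fin (k + 2) → ZMod 2) ≃ₗ[ZMod 2] S :=
      LinearEquiv.ofFinrankEq _ _ (by simp [hfin])
    refine ⟨X.subtype ∘ₗ S.subtype ∘ₗ e.toLinearMap, ?_, ?_⟩
    · exact X.injective_subtype.comp (S.injective_subtype.comp e.injective)
    · rintro _ ⟨x, hx, rfl⟩
      have := hcon (e x).1 (e x).2 (by simpa using hx)
      simpa [N] using this) (by
    have h1 : (2 : ℝ) ^ (1 - ((k + 2 : ℕ) : ℤ)) = 8 / 2 ^ (k + 4) := by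
      rw [show (1 - ((k + 2 : ℕ) : ℤ)) = 3 - ((k + 4 : ℕ) : ℤ) by push_cast; ring,
        zpow_sub₀ (by norm_num), zpow_natCast]; norm_num
    have h2 : (2 : ℝ) ^ (-2 - ((k + 2 : ℕ) : ℤ)) = 1 / 2 ^ (k + 4) := by
      rw [show (-2 - ((k + 2 : ℕ) : ℤ)) = 0 - ((k + 4 : ℕ) : ℤ) by push_cast; ring,
        zpow_sub₀ (by norm_num), zpow_natCast]; norm_num
    rw [h1, h2] at hsize
    have hpos : (0 : ℝ) < 2 ^ (k + 4) := by positivity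
    have h3 : (2 : ℝ) ^ r * 2 ^ (k + 4) < 2 ^ (k + 4) * M.ncard + 11 * 2 ^ r := by
      have := mul_lt_mul_of_pos_left hsize hpos
      have e : (2 : ℝ) ^ (k + 4) * (2 ^ r * (1 - 8 / 2 ^ (k + 4) - 3 * (1 / 2 ^ (k + 4))))
        = 2 ^ r * 2 ^ (k + 4) - 11 * 2 ^ r := by field_simp; ring
      rw [e] at this
      linarith
    have h4 : 2 ^ r * 2 ^ (k + 4) < 2 ^ (k + 4) * M.ncard + 11 * 2 ^ r := by exact_mod_cast h3
    rw [hN, hXc] at hcc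
    rw [hXc]
    have h5 := congrArg (2 ^ (k + 4) * ·) hcc
    simp only [mul_add] at h5
    rw [mul_comm (2 ^ r)] at h4
    omega)
  have hQ : Module.finrank (ZMod 2) (X ⧸ W) = k + 1 := by
    have e1 := Submodule.card_eq_card_quotient_mul_card W
    rw [Nat.card_eq_fintype_card (α := X), ← hW2] at e1
    have e2 := Nat.eq_of_mul_eq_mul_left (Nat.card_pos (α := W)) e1
    rw [Nat.card_eq_fintype_card, Module.card_eq_pow_finrank (K := ZMod 2) (V := X ⧸ W), ZMod.card] at e2
    exact (Nat.pow_right_injective le_rfl e2).symm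
  let e : (X ⧸ W) ≃ₗ[ZMod 2] (Fin (k + 1) → ZMod 2) :=
    LinearEquiv.ofFinrankEq _ _ (by simp [hQ])
  obtain ⟨φ, hφ⟩ := LinearMap.exists_extend (e.toLinearMap ∘ₗ W.mkQ)
  refine Nat.sInf_le ⟨φ, fun x hx h => ?_⟩
  have h1 := LinearMap.congr_fun hφ ⟨x, Submodule.subset_span hx⟩
  simp only [LinearMap.comp_apply, Submodule.subtype_apply] at h1
  rw [h] at h1
  have h2 : W.mkQ ⟨x, Submodule.subset_span hx⟩ = 0 := by
    apply e.injective; rw [map_zero]; exact h1.symm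
  have h3 := hW1 _ ((Submodule.Quotient.mk_eq_zero W).1 h2)
  simp [N, hx] at h3
end
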